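/- arXiv:1305.1178 — 5 statements merged into one kernel-verified Lean document; each statement's English description precedes it below -/
import Mathlib

section
/- Let d ≥ 1 and r ≥ 1 be integers and set m = (d+1)(r-1)+1. For any points p₁, …, p_m in ℝ^d there exists a point c ∈ ℝ^d such that c lies in the convex hull of {p_i : i ∈ S} for every subset S ⊆ {1, …, m} with |S| ≥ d(r-1)+1. -/
/-- **Classical Central Point Theorem.** Given any `m = (d+1)(r-1)+1` points in `ℝ^d`,
there is a point `c ∈ ℝ^d` lying in the convex hull of every subset of the points
having at least `d(r-1)+1` elements. -/
theorem central_point_theorem (d r : ℕ) (hd : 1 ≤ d) (hr : 1 ≤ r)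
    (m : ℕ) (hm : m = (d + 1) * (r - 1) + 1)
    (p : Fin m → EuclideanSpace ℝ (Fin d)) :
    ∃ c : EuclideanSpace ℝ (Fin d),
      ∀ S : Finset (Fin m), d * (r - 1) + 1 ≤ S.card →
        c ∈ convexHull ℝ (p '' (S : Set (Fin m))) := by
  have key : (⋂ S ∈ (Finset.univ.filter fun S : Finset (Fin m) => d * (r - 1) + 1 ≤ S.card),
      convexHull ℝ (p '' (S : Set (Fin m)))).Nonempty := by
    apply Convex.helly_theorem' (𝕜 := ℝ) (fun S _ => convex_convexHull ℝ _)
    intro I hI hc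
    rw [finrank_euclideanSpace_fin] at hc
    have h1 : (I.biUnion fun S => Sᶜ).card ≤ I.card * (r - 1) := by
      apply Finset.card_biUnion_le_card_mul
      intro S hS
      have h2 := (Finset.mem_filter.1 (hI hS)).2
      have h5 := hm
      rw [Nat.add_mul] at h5
      rw [Finset.card_compl, Fintype.card_fin]
      omega
    have h3 : I.card * (r - 1) ≤ (d + 1) * (r - 1) := Nat.mul_le_mul_right _ hc
    obtain ⟨i, hi⟩ : ∃ i, i ∉ (I.biUnion fun S => Sᶜ) := by
      by_contra! h
      have h4 := Finset.eq_univ_iff_forall.2 h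
      rw [h4, Finset.card_univ, Fintype.card_fin] at h1
      omega
    refine ⟨p i, ?_⟩
    simp only [Set.mem_iInter]
    intro S hS
    apply subset_convexHull
    refine Set.mem_image_of_mem _ ?_
    by_contra hn
    exact hi (Finset.mem_biUnion.2 ⟨S, hS, Finset.mem_compl.2 hn⟩)
  obtain ⟨c, hc⟩ := key
  refine ⟨c, fun S hS => ?_⟩
  simp only [Set.mem_iInter] at hc
  exact hc S (Finset.mem_filter.2 ⟨Finset.mem_univ _, hS⟩)
end

section
/- Let d ≥ 1 and r ≥ 1 be integers and set m = (d+1)(r-1)+1. For any points p₁, …, p_m in ℝ^d there exists a function σ : {1, …, m} → {1, …, r} (a partition of the index set into r parts X₁, …, X_r, where X_j = σ⁻¹(j)) such that the intersection ⋂_{j=1}^{r} conv{p_i : i ∈ X_j} is nonempty. -/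
open Finset in
lemma tv_carath {W : Type*} [NormedAddCommGroup W] [InnerProductSpace ℝ W]
    [FiniteDimensional ℝ W] {n r : ℕ} (hr : 0 < r) (hn : Module.finrank ℝ W < n)
    (v : Fin n → Fin r → W) (hv : ∀ i, ∑ j, v i j = 0) :
    ∃ (σ : Fin n → Fin r) (w : Fin n → ℝ), (∀ i, 0 ≤ w i) ∧ ∑ i, w i = 1 ∧
      ∑ i, w i • v i (σ i) = 0 := by
  classical
  have hn0 : 0 < n := by omega
  have : Nonempty (Fin n) := ⟨⟨0, hn0⟩⟩
  have : Nonempty (Fin r) := ⟨⟨0, hr⟩⟩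
  -- minimizer for each σ
  have h1 : ∀ σ : Fin n → Fin r, ∃ w ∈ stdSimplex ℝ (Fin n), ∀ w' ∈ stdSimplex ℝ (Fin n),
      ‖∑ i, w i • v i (σ i)‖ ≤ ‖∑ i, w' i • v i (σ i)‖ := by
    intro σ
    have hc : ContinuousOn (fun w : Fin n → ℝ => ‖∑ i, w i • v i (σ i)‖)
        (stdSimplex ℝ (Fin n)) := by fun_prop
    obtain ⟨w, hw, hmin⟩ := (isCompact_stdSimplex ℝ (Fin n)).exists_isMinOn
      ⟨_, single_mem_stdSimplex ℝ (⟨0, hn0⟩ : Fin n)⟩ hc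
    exact ⟨w, hw, fun w' hw' => hmin hw'⟩
  choose W0 hW0 hW0min using h1
  obtain ⟨σ, hσ⟩ := Finite.exists_min (fun σ => ‖∑ i, W0 σ i • v i (σ i)‖)
  set w := W0 σ with hwdef
  set z := ∑ i, w i • v i (σ i) with hz
  have hmin : ∀ (τ : Fin n → Fin r), ∀ w' ∈ stdSimplex ℝ (Fin n),
      ‖z‖ ≤ ‖∑ i, w' i • v i (τ i)‖ := fun τ w' hw' => (hσ τ).trans (hW0min τ w' hw')
  refine ⟨σ, w, (hW0 σ).1, (hW0 σ).2, ?_⟩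
  rw [← hz]
  by_contra hz0
  have hzpos : 0 < ‖z‖ ^ 2 := by positivity
  have key : ∀ (τ : Fin n → Fin r), ∀ w' ∈ stdSimplex ℝ (Fin n),
      ∑ i, w' i • v i (τ i) = z → ∀ k, ‖z‖ ^ 2 ≤ inner ℝ z (v k (τ k)) := by
    intro τ w' hw' hz' k
    by_contra! hlt
    set y := v k (τ k) with hy
    have hstep : ∀ t : ℝ, 0 ≤ t → t ≤ 1 → ‖z‖ ≤ ‖z + t • (y - z)‖ := by
      intro t ht0 ht1
      have hmem : (1 - t) • w' + t • Pi.single k (1 : ℝ) ∈ stdSimplex ℝ (Fin n) :=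
        convex_stdSimplex ℝ (Fin n) hw' (single_mem_stdSimplex ℝ k) (by linarith) ht0 (by ring)
      have := hmin τ _ hmem
      convert this using 2
      simp only [Pi.add_apply, Pi.smul_apply, smul_eq_mul, add_smul, sum_add_distrib, mul_smul,
        ← smul_sum, hz']
      have : ∑ i, (Pi.single k (1 : ℝ) : Fin n → ℝ) i • v i (τ i) = y := by
        rw [Finset.sum_eq_single k] <;> simp +contextual [hy, Pi.single_apply]
      rw [this]
      module
    set c := ‖z‖ ^ 2 - inner ℝ z y with hc
    have hcpos : 0 < c := by linarith
    set D := ‖y - z‖ ^ 2 with hD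
    have hD0 : 0 ≤ D := by positivity
    set t := c / (c + D) with ht
    have ht0 : 0 < t := by positivity
    have ht1 : t ≤ 1 := by rw [ht, div_le_one (by positivity)]; linarith
    have h2 := hstep t ht0.le ht1
    have h3 : ‖z‖ ^ 2 ≤ ‖z + t • (y - z)‖ ^ 2 := by gcongr
    rw [norm_add_sq_real, inner_smul_right, norm_smul, inner_sub_right,
      real_inner_self_eq_norm_sq, mul_pow, Real.norm_eq_abs, sq_abs] at h3
    have h4 : t * (c + D) = c := by rw [ht]; field_simp
    have h5 : 0 ≤ t * (t * D - 2 * c) := by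
      have : t * (t * D - 2 * c) = 2 * (t * (inner ℝ z y - ‖z‖ ^ 2)) + t ^ 2 * D := by
        rw [hc]; ring
      rw [this]; linarith
    have h6 : 0 ≤ t * D - 2 * c := nonneg_of_mul_nonneg_right h5 ht0
    nlinarith [mul_pos ht0 hcpos]
  -- some representation with a zero weight
  have hzero : ∃ w' ∈ stdSimplex ℝ (Fin n), ∑ i, w' i • v i (σ i) = z ∧ ∃ k, w' k = 0 := by
    by_cases hex : ∃ k, w k = 0
    · exact ⟨w, hW0 σ, rfl, hex⟩
    push Not at hex
    have hwpos : ∀ i, 0 < w i := fun i => lt_of_le_of_ne ((hW0 σ).1 i) (hex i).symm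
    have hle := key σ w (hW0 σ) rfl
    have hsum0 : ∑ i, w i * (inner ℝ z (v i (σ i)) - ‖z‖ ^ 2) = 0 := by
      have : ∑ i, w i * inner ℝ z (v i (σ i)) = ‖z‖ ^ 2 := by
        rw [← real_inner_self_eq_norm_sq]
        conv_rhs => rw [hz, inner_sum]
        simp only [inner_smul_right, ← hz]
      simp only [mul_sub, sum_sub_distrib, this, ← sum_mul]
      rw [(hW0 σ).2]; ring
    have heq : ∀ i, inner ℝ z (v i (σ i)) = ‖z‖ ^ 2 := by
      intro i
      have := (sum_eq_zero_iff_of_nonneg (fun i _ => mul_nonneg (hwpos i).le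
        (sub_nonneg.2 (hle i)))).1 hsum0 i (mem_univ i)
      rcases mul_eq_zero.1 this with h | h
      · exact absurd h (hwpos i).ne'
      · linarith
    have hdep : ¬ LinearIndependent ℝ (fun i => v i (σ i)) := by
      intro h
      have := h.fintype_card_le_finrank
      simp at this; omega
    rw [Fintype.not_linearIndependent_iff] at hdep
    obtain ⟨g, hg, i0, hi0⟩ := hdep
    have hgs : ∑ i, g i = 0 := by
      have h := congrArg (fun x => inner ℝ z x) hg
      simp only [inner_sum, inner_smul_right, heq, inner_zero_right, ← sum_mul] at h
      rcases mul_eq_zero.1 h with h | h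
      · exact h
      · exact absurd h hzpos.ne'
    have hpos : ∃ i, 0 < g i := by
      by_contra! hneg
      exact hi0 ((sum_eq_zero_iff_of_nonpos (fun i _ => hneg i)).1 hgs i0 (mem_univ _))
    obtain ⟨k, hk, hkmin⟩ := (univ.filter (fun i => 0 < g i)).exists_min_image
      (fun i => w i / g i) (by obtain ⟨i, hi⟩ := hpos; exact ⟨i, by simpa using hi⟩)
    have hgk : 0 < g k := by simpa using hk
    have htk : 0 ≤ w k / g k := div_nonneg (hwpos k).le hgk.le
    refine ⟨fun i => w i - w k / g k * g i, ⟨?_, ?_⟩, ?_, k, ?_⟩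
    · intro i
      by_cases hgi : 0 < g i
      · have := hkmin i (by simpa using hgi)
        have := (le_div_iff₀ hgi).1 this
        simp only; linarith
      · have := mul_nonpos_of_nonneg_of_nonpos htk (not_lt.1 hgi)
        have := hwpos i
        simp only; linarith
    · rw [sum_sub_distrib, ← mul_sum, hgs, (hW0 σ).2]; ring
    · simp only [sub_smul, mul_smul, sum_sub_distrib, ← smul_sum, hg, smul_zero, sub_zero, ← hz]
    · field_simp; ring
  obtain ⟨w', hw', hz', k, hk⟩ := hzero
  have hall : ∀ j, ‖z‖ ^ 2 ≤ inner ℝ z (v k j) := by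
    intro j
    have := key (Function.update σ k j) w' hw' (by
      rw [← hz']
      refine sum_congr rfl fun i _ => ?_
      by_cases hik : i = k
      · subst hik; simp [hk]
      · simp [hik]) k
    simpa using this
  have : ∑ j : Fin r, ‖z‖ ^ 2 ≤ ∑ j, inner ℝ z (v k j) := sum_le_sum fun j _ => hall j
  rw [← inner_sum, hv, inner_zero_right] at this
  simp at this
  have : (0 : ℝ) < r * ‖z‖ ^ 2 := by positivity
  linarith

/-- **Classical Tverberg Theorem.** Any `m = (d+1)(r-1)+1` points in `ℝ^d` can be
partitioned into `r` parts whose convex hulls have a common point. -/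
theorem tverberg_theorem (d r : ℕ) (hd : 1 ≤ d) (hr : 1 ≤ r)
    (m : ℕ) (hm : m = (d + 1) * (r - 1) + 1)
    (p : Fin m → EuclideanSpace ℝ (Fin d)) :
    ∃ σ : Fin m → Fin r,
      (⋂ j : Fin r, convexHull ℝ (p '' {i | σ i = j})).Nonempty := by
  classical
  obtain ⟨s, rfl⟩ : ∃ s, r = s + 1 := ⟨r - 1, by omega⟩
  let q : Fin m → Option (Fin d) → ℝ := fun i b => b.elim 1 (fun b => p i b)
  let u : Fin (s + 1) → Fin s → ℝ := fun j a =>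
    (if j = a.castSucc then 1 else 0) - (if j = Fin.last s then 1 else 0)
  let v : Fin m → Fin (s + 1) → EuclideanSpace ℝ (Fin s × Option (Fin d)) := fun i j =>
    WithLp.toLp 2 (fun a => u j a.1 * q i a.2)
  obtain ⟨σ, w, hw0, hw1, hw⟩ := tv_carath (n := m) (r := s + 1) (by omega)
    (by simp [hm, mul_comm]) v (by
      intro i
      ext a
      simp [v, u, ← Finset.sum_mul])
  have hS : ∀ b (j : Fin (s + 1)), ∑ i with σ i = j, w i * q i b
      = ∑ i with σ i = Fin.last s, w i * q i b := by
    intro b j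
    induction j using Fin.lastCases with
    | last => rfl
    | cast a =>
      have h := congrArg (fun x : EuclideanSpace ℝ (Fin s × Option (Fin d)) => x (a, b)) hw
      simp only [v, u, WithLp.ofLp_sum, WithLp.ofLp_smul, Finset.sum_apply, Pi.smul_apply,
        smul_eq_mul, WithLp.ofLp_zero, Pi.zero_apply] at h
      rw [Finset.sum_filter, Finset.sum_filter, ← sub_eq_zero, ← Finset.sum_sub_distrib]
      refine Eq.trans (Finset.sum_congr rfl fun i _ => ?_) h
      split_ifs <;> ring
  set c := ∑ i with σ i = Fin.last s, w i with hc
  have hcj : ∀ j, ∑ i with σ i = j, w i = c := by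
    intro j
    have := hS none j
    simpa [q] using this
  have hcpos : 0 < c := by
    have h : ∑ j, ∑ i with σ i = j, w i = 1 := by
      rw [Finset.sum_fiberwise, hw1]
    simp only [hcj] at h
    simp at h
    by_contra! hneg
    have : ((s : ℝ) + 1) * c ≤ 0 := mul_nonpos_of_nonneg_of_nonpos (by positivity) hneg
    linarith
  refine ⟨σ, (Finset.univ.filter (fun i => σ i = Fin.last s)).centerMass w p, ?_⟩
  rw [Set.mem_iInter]
  intro j
  have : (Finset.univ.filter (fun i => σ i = Fin.last s)).centerMass w p
      = (Finset.univ.filter (fun i => σ i = j)).centerMass w p := by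
    unfold Finset.centerMass
    rw [hcj, hcj]
    congr 1
    ext b
    have := hS (some b) j
    simpa [q] using this.symm
  rw [this]
  apply Finset.centerMass_mem_convexHull
  · exact fun i _ => hw0 i
  · rw [hcj]; exact hcpos
  · intro i hi
    exact ⟨i, by simpa using hi, rfl⟩
end

section
/- Let d ≥ 1 and r ≥ 1 be integers, let m = (d+1)(r-1), and let f : Δ^m → ℝ^d be a continuous map, where Δ^m is the standard m-simplex. Then the intersection ⋂ f(Δ_S), taken over all subsets S of the vertex index set {0, 1, …, m} with |S| = d(r-1)+1 (i.e., over all faces of Δ^m of dimension d(r-1)), is nonempty. -/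
section Scarf
open Finset
variable {I X : Type} [Fintype I] [DecidableEq I] [Fintype X] [DecidableEq X]
set_option linter.unusedSectionVars false

def ScarfDom (v : I → X → ℤ) (R : Finset X) : Prop := ∀ y, ∃ i, ∀ x ∈ R, v i y ≤ v i x

theorem scarf_sperner_count (c : X → I) (i0 : I) (R : Finset X)
    (hR : R.card = Fintype.card I) (hne : R.image c ≠ univ) :
    Even (R.filter (fun x => (R.erase x).image c = univ.erase i0)).card := by
  by_cases h : ∃ x1 ∈ R, (R.erase x1).image c = univ.erase i0
  · obtain ⟨x1, hx1, h1⟩ := h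
    have hcx1 : c x1 ≠ i0 := by
      intro hc
      apply hne
      rw [← insert_erase hx1, image_insert, h1, hc, insert_erase (mem_univ _)]
    have hinj : Set.InjOn c (R.erase x1 : Finset X) := by
      apply card_image_iff.mp
      rw [h1, card_erase_of_mem hx1, card_erase_of_mem (mem_univ _), hR, card_univ]
    have : c x1 ∈ (R.erase x1).image c := by rw [h1]; simp [hcx1]
    obtain ⟨x2, hx2, h2⟩ := mem_image.mp this
    have hx2' := mem_erase.mp hx2
    have key : R.filter (fun x => (R.erase x).image c = univ.erase i0) = {x1, x2} := by
      ext x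
      simp only [mem_filter, mem_insert, mem_singleton]
      constructor
      · rintro ⟨hx, hxc⟩
        by_contra hcon
        push Not at hcon
        have hxe : x ∈ R.erase x1 := mem_erase.mpr ⟨hcon.1, hx⟩
        have : c x ∈ (R.erase x1).image c := mem_image_of_mem _ hxe
        rw [h1, ← hxc] at this
        obtain ⟨z, hz, hzc⟩ := mem_image.mp this
        have hz' := mem_erase.mp hz
        by_cases hz1 : z = x1
        · subst hz1
          exact hcon.2 (hinj hxe hx2 (by rw [h2, hzc]))
        · exact hz'.1 (hinj (mem_erase.mpr ⟨hz1, hz'.2⟩) hxe hzc)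
      · rintro (rfl | rfl)
        · exact ⟨hx1, h1⟩
        · refine ⟨hx2'.2, ?_⟩
          rw [← h1]
          ext k
          simp only [mem_image, mem_erase]
          constructor
          · rintro ⟨z, ⟨hz, hzR⟩, rfl⟩
            by_cases hz1 : z = x1
            · subst hz1; exact ⟨x, hx2', h2⟩
            · exact ⟨z, ⟨hz1, hzR⟩, rfl⟩
          · rintro ⟨z, ⟨hz, hzR⟩, rfl⟩
            by_cases hz1 : z = x
            · subst hz1; exact ⟨x1, ⟨fun h => hx2'.1 h.symm, hx1⟩, h2.symm⟩
            · exact ⟨z, ⟨hz1, hzR⟩, rfl⟩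
    rw [key, card_pair (fun h => hx2'.1 h.symm)]
    exact even_two
  · push Not at h
    rw [filter_eq_empty_iff.mpr (fun x hx => h x hx)]
    simp

theorem scarf_door_even (v : I → X → ℤ) (hv : ∀ i, Function.Injective (v i))
    (s : I → X) (h2 : ∀ i j x, i ≠ j → (∀ k, x ≠ s k) → v i x < v i (s j))
    (Q : Finset X) (hQ : Q.card + 1 = Fintype.card I) 
    (t : X) (ht : t ∈ Q) (hts : ∀ k, t ≠ s k) [DecidablePred (fun x => x ∉ Q ∧ ScarfDom v (insert x Q))] :
    Even (univ.filter (fun x => x ∉ Q ∧ ScarfDom v (insert x Q))).card := by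
  classical
  by_cases hD : ScarfDom v Q
  swap
  · rw [filter_eq_empty_iff.mpr]
    · simp
    · rintro x - ⟨_, h⟩
      exact hD fun y => (h y).imp fun i hi z hz => hi z (mem_insert_of_mem hz)
  have hex : ∀ i, ∃ q ∈ Q, ∀ x ∈ Q, v i q ≤ v i x := fun i =>
    exists_min_image Q (v i) ⟨t, ht⟩
  choose μ hμQ hμ using hex
  have hsurj : ∀ q ∈ Q, ∃ i, μ i = q := by
    intro q hq
    obtain ⟨i, hi⟩ := hD q
    exact ⟨i, hv i (le_antisymm (hμ i q hq) (hi _ (hμQ i)))⟩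
  obtain ⟨a, -, b, -, hab, hμab⟩ := exists_ne_map_eq_of_card_lt_of_maps_to
    (s := (univ : Finset I)) (t := Q) (by rw [card_univ]; omega) (f := μ) (fun i _ => hμQ i)
  -- sets mapping onto Q
  have hJ : ∀ J : Finset I, J ≠ univ → (∀ q ∈ Q, ∃ i ∈ J, μ i = q) →
      J = univ.erase a ∨ J = univ.erase b := by
    intro J hJ hJs
    have h1 : J.image μ = Q := by
      ext q
      simp only [mem_image]
      exact ⟨by rintro ⟨i, _, rfl⟩; exact hμQ i, hJs q⟩
    have h2 : J.card < Fintype.card I := card_lt_univ_of_notMem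
      (x := (by_contra fun h => hJ (eq_univ_of_forall (by simpa using h)) : ∃ x, x ∉ J).choose)
      (by_contra fun h => hJ (eq_univ_of_forall (by simpa using h)) : ∃ x, x ∉ J).choose_spec
    have h3 : Q.card ≤ J.card := by rw [← h1]; exact card_image_le
    have hinj : Set.InjOn μ J := card_image_iff.mp (by rw [h1]; omega)
    have : a ∉ J ∨ b ∉ J := by
      by_contra hcon
      push Not at hcon
      exact hab (hinj hcon.1 hcon.2 hμab)
    refine this.imp ?_ ?_
    all_goals
      intro h
      apply eq_of_subset_of_card_le
      · intro z hz
        exact mem_erase.mpr ⟨fun e => h (e ▸ hz), mem_univ _⟩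
      · rw [card_erase_of_mem (mem_univ _), card_univ]; omega
  have hsurj' : ∀ e, (e = a ∨ e = b) → ∀ q ∈ Q, ∃ i, i ≠ e ∧ μ i = q := by
    intro e he q hq
    obtain ⟨i, hi⟩ := hsurj q hq
    by_cases hie : i = e
    · rcases he with rfl | rfl
      · exact ⟨b, hab.symm, by rw [← hμab, ← hi, hie]⟩
      · exact ⟨a, hab, by rw [hμab, ← hi, hie]⟩
    · exact ⟨i, hie, hi⟩
  let P : I → X → Prop := fun e x => (∀ j, j ≠ e → v j (μ j) < v j x) ∧
    (∀ y, (∀ j, j ≠ e → v j (μ j) < v j y) → v e y ≤ v e x)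
  have hiff : ∀ x, (x ∉ Q ∧ ScarfDom v (insert x Q)) ↔ (P a x ∨ P b x) := by
    intro x
    constructor
    · rintro ⟨hx, hd⟩
      have := hJ (univ.filter fun i => v i (μ i) < v i x) ?_ ?_
      · have aux : ∀ e, (univ.filter fun i => v i (μ i) < v i x) = univ.erase e → P e x := by
          intro e he
          have h1 : ∀ j, j ≠ e → v j (μ j) < v j x := by
            intro j hj
            have : j ∈ univ.erase e := by simp [hj]
            rw [← he] at this
            simpa using this
          refine ⟨h1, fun y hy => ?_⟩
          obtain ⟨i, hi⟩ := hd y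
          by_cases hie : i = e
          · subst hie; exact hi x (mem_insert_self _ _)
          · exact absurd (hi (μ i) (mem_insert_of_mem (hμQ i))) (not_le.mpr (hy i hie))
        exact this.imp (aux a) (aux b)
      · intro h
        obtain ⟨i, hi⟩ := hd x
        have : i ∈ (univ.filter fun i => v i (μ i) < v i x) := by rw [h]; exact mem_univ _
        have := (mem_filter.mp this).2
        exact absurd (hi (μ i) (mem_insert_of_mem (hμQ i))) (not_le.mpr this)
      · intro q hq
        obtain ⟨i, hi⟩ := hd q
        have e : μ i = q := hv i (le_antisymm (hμ i q hq) (hi _ (mem_insert_of_mem (hμQ i))))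
        refine ⟨i, ?_, e⟩
        simp only [mem_filter, mem_univ, true_and]
        rw [e]
        refine lt_of_le_of_ne (hi x (mem_insert_self _ _)) fun h => hx ?_
        rw [← hv i h]; exact hq
    · intro h
      have : ∃ e, (e = a ∨ e = b) ∧ P e x := by
        rcases h with h | h
        exacts [⟨a, Or.inl rfl, h⟩, ⟨b, Or.inr rfl, h⟩]
      obtain ⟨e, he, hx, hy⟩ := this
      constructor
      · intro hxQ
        obtain ⟨i, hie, hi⟩ := hsurj' e he x hxQ
        have := hx i hie
        rw [hi] at this
        exact lt_irrefl _ this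
      · intro y
        by_cases hM : ∀ j, j ≠ e → v j (μ j) < v j y
        · obtain ⟨i, hi⟩ := hD y
          have hie : i = e := by
            by_contra hie
            exact absurd (hi _ (hμQ i)) (not_le.mpr (hM i hie))
          subst hie
          refine ⟨i, fun z hz => ?_⟩
          rcases mem_insert.mp hz with rfl | hz
          · exact hy y hM
          · exact hi z hz
        · push Not at hM
          obtain ⟨j, hj, hjy⟩ := hM
          refine ⟨j, fun z hz => ?_⟩
          rcases mem_insert.mp hz with rfl | hz
          · exact hjy.trans (hx j hj).le
          · exact hjy.trans (hμ j z hz)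
  have hcount : ∀ e, (univ.filter (P e)).card = 1 := by
    intro e
    have hne : (univ.filter fun y => ∀ j, j ≠ e → v j (μ j) < v j y).Nonempty := by
      refine ⟨s e, ?_⟩
      simp only [mem_filter, mem_univ, true_and]
      intro j hj
      exact (hμ j t ht).trans_lt (h2 j e t hj hts)
    obtain ⟨x, hx, hmax⟩ := exists_max_image _ (v e) hne
    simp only [mem_filter, mem_univ, true_and] at hx hmax
    rw [card_eq_one]
    refine ⟨x, ?_⟩
    ext z
    simp only [mem_filter, mem_univ, true_and, mem_singleton]
    constructor
    · rintro ⟨h1, h2⟩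
      exact hv e (le_antisymm (hmax z h1) (h2 x hx))
    · rintro rfl
      exact ⟨hx, hmax⟩
  have : univ.filter (fun x => x ∉ Q ∧ ScarfDom v (insert x Q)) =
      univ.filter (P a) ∪ univ.filter (P b) := by
    ext x
    simp only [mem_filter, mem_univ, true_and, mem_union]
    exact hiff x
  rw [this, card_union_of_disjoint, hcount, hcount]
  · exact even_two
  · rw [disjoint_left]
    intro x hxa hxb
    simp only [mem_filter, mem_univ, true_and] at hxa hxb
    obtain ⟨i, hi⟩ := hD x
    apply absurd (hi _ (hμQ i))
    rw [not_le]
    by_cases hia : i = a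
    · exact hxb.1 i (hia ▸ hab)
    · exact hxa.1 i hia

theorem scarf_door_one (v : I → X → ℤ) (hv : ∀ i, Function.Injective (v i))
    (s : I → X) 
    (h1 : ∀ i x, v i (s i) ≤ v i x)
    (h2 : ∀ i j x, i ≠ j → (∀ k, x ≠ s k) → v i x < v i (s j))
    (t : X) (hts : ∀ k, t ≠ s k) (i0 : I)
    [DecidablePred (fun x => x ∉ (univ.erase i0).image s ∧
      ScarfDom v (insert x ((univ.erase i0).image s)))] :
    (univ.filter (fun x => x ∉ (univ.erase i0).image s ∧
      ScarfDom v (insert x ((univ.erase i0).image s)))).card = 1 := by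
  classical
  obtain ⟨x0, hx0, hmax⟩ := exists_max_image (univ.filter fun x => ∀ k, x ≠ s k) (v i0)
    ⟨t, by simpa using hts⟩
  simp only [mem_filter, mem_univ, true_and] at hx0 hmax
  rw [card_eq_one]
  refine ⟨x0, ?_⟩
  ext x
  simp only [mem_filter, mem_univ, true_and, mem_singleton]
  constructor
  · rintro ⟨hx, hd⟩
    have key : ∀ y, (∀ k, y ≠ s k) → v i0 y ≤ v i0 x := by
      intro y hy
      obtain ⟨i, hi⟩ := hd y
      by_cases hii : i = i0
      · subst hii; exact hi x (mem_insert_self _ _)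
      · exfalso
        have := hi (s i) (mem_insert_of_mem (mem_image_of_mem _ (by simp [hii])))
        exact hy i (hv i (le_antisymm this (h1 i y)))
    have hxs : ∀ k, x ≠ s k := by
      intro k hk
      by_cases hk0 : k = i0
      · subst hk0
        have := key x0 hx0
        rw [hk] at this
        exact hx0 k (hv k (le_antisymm this (h1 k _)))
      · exact hx (hk ▸ mem_image_of_mem _ (by simp [hk0]))
    exact hv i0 (le_antisymm (hmax x hxs) (key x0 hx0))
  · rintro rfl
    constructor
    · simp only [mem_image, not_exists, not_and]
      intro k _ h
      exact hx0 k h.symm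
    · intro y
      by_cases hy : ∀ k, y ≠ s k
      · refine ⟨i0, fun z hz => ?_⟩
        rcases mem_insert.mp hz with rfl | hz
        · exact hmax y hy
        · obtain ⟨k, hk, rfl⟩ := mem_image.mp hz
          exact (h2 i0 k y (fun h => (mem_erase.mp hk).1 h.symm) hy).le
      · push Not at hy
        obtain ⟨k, rfl⟩ := hy
        exact ⟨k, fun z _ => h1 k z⟩

theorem scarf_lemma [Nonempty I] (v : I → X → ℤ) (hv : ∀ i, Function.Injective (v i))
    (s : I → X) 
    (h1 : ∀ i x, v i (s i) ≤ v i x)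
    (h2 : ∀ i j x, i ≠ j → (∀ k, x ≠ s k) → v i x < v i (s j))
    (t : X) (hts : ∀ k, t ≠ s k) (c : X → I) (hc : ∀ i, c (s i) = i) :
    ∃ R : Finset X, ScarfDom v R ∧ R.image c = univ := by
  classical
  by_contra hcon
  push Not at hcon
  obtain ⟨i0⟩ := ‹Nonempty I›
  let Ro : Finset (Finset X) := univ.filter fun R => ScarfDom v R ∧ R.card = Fintype.card I
  let Do : Finset (Finset X) := univ.filter fun Q => Q.image c = univ.erase i0 ∧
    Q.card + 1 = Fintype.card I
  have hsum : ∑ R ∈ Ro, (R.filter (fun x => (R.erase x).image c = univ.erase i0)).card =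
      ∑ Q ∈ Do, (univ.filter (fun x => x ∉ Q ∧ ScarfDom v (insert x Q))).card := by
    rw [← card_sigma, ← card_sigma]
    refine card_bij' (i := fun p _ => ⟨p.1.erase p.2, p.2⟩)
      (j := fun p _ => ⟨insert p.2 p.1, p.2⟩) ?_ ?_ ?_ ?_
    · rintro ⟨R, x⟩ h
      simp only [Ro, Do, mem_sigma, mem_filter, mem_univ, true_and] at h ⊢
      obtain ⟨⟨hd, hcard⟩, hx, him⟩ := h
      refine ⟨⟨him, ?_⟩, by simp, ?_⟩
      · rw [card_erase_add_one hx, hcard]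
      · rwa [insert_erase hx]
    · rintro ⟨Q, x⟩ h
      simp only [Ro, Do, mem_sigma, mem_filter, mem_univ, true_and] at h ⊢
      obtain ⟨⟨him, hcard⟩, hx, hd⟩ := h
      refine ⟨⟨hd, ?_⟩, by simp, ?_⟩
      · rw [card_insert_of_notMem hx, hcard]
      · rwa [erase_insert hx]
    · rintro ⟨R, x⟩ h
      simp only [mem_sigma, mem_filter] at h
      simp [insert_erase h.2.1]
    · rintro ⟨Q, x⟩ h
      simp only [mem_sigma, mem_filter] at h
      simp [erase_insert h.2.2.1]
  have heven : Even (∑ R ∈ Ro, (R.filter (fun x => (R.erase x).image c = univ.erase i0)).card) := by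
    apply even_sum
    intro R hR
    simp only [Ro, mem_filter, mem_univ, true_and] at hR
    exact scarf_sperner_count c i0 R hR.2 (hcon R hR.1)
  have hs : Function.Injective s := fun i j h => by rw [← hc i, ← hc j, h]
  have hQ0 : (univ.erase i0).image s ∈ Do := by
    simp only [Do, mem_filter, mem_univ, true_and]
    constructor
    · rw [image_image]
      ext k
      simp [Function.comp, hc]
    · rw [card_image_of_injective _ hs, card_erase_add_one (mem_univ _), card_univ]
  rw [hsum, ← add_sum_erase _ _ hQ0, scarf_door_one v hv s h1 h2 t hts i0] at heven
  have h' : Even (∑ Q ∈ Do.erase ((univ.erase i0).image s),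
      (univ.filter (fun x => x ∉ Q ∧ ScarfDom v (insert x Q))).card) := by
    apply even_sum
    intro Q hQ
    simp only [Do, mem_erase, mem_filter, mem_univ, true_and] at hQ
    obtain ⟨hne, him, hcard⟩ := hQ
    have : ∃ t ∈ Q, ∀ k, t ≠ s k := by
      by_contra hall
      push Not at hall
      apply hne
      apply eq_of_subset_of_card_le
      · intro q hq
        obtain ⟨k, rfl⟩ := hall q hq
        have := mem_image_of_mem c hq
        rw [him, hc] at this
        exact mem_image_of_mem _ this
      · rw [card_image_of_injective _ hs, card_erase_of_mem (mem_univ _), card_univ]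
        omega
    obtain ⟨t', ht', hts'⟩ := this
    exact scarf_door_even v hv s h2 Q hcard t' ht' hts'
  rw [Nat.even_add] at heven
  exact absurd (heven.mpr h') (by decide)
end Scarf

theorem scarf_grid (n N : ℕ) (hN : 0 < N) (c : (Fin (n + 1) → ℝ) → Fin (n + 1)) :
    ∃ p ∈ stdSimplex ℝ (Fin (n + 1)), ∀ i, ((n : ℝ) + 1) / N < p i →
      ∃ q ∈ stdSimplex ℝ (Fin (n + 1)), c q = i ∧ ∀ j, |q j - p j| ≤ ((n : ℝ) + 1) / N := by
  classical
  let T := {a : Fin (n + 1) → Fin (N + 1) // ∑ i, (a i : ℕ) = N}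
  let K : ℕ := Fintype.card T
  let e : T ≃ Fin K := Fintype.equivFin T
  let g : T → (Fin (n + 1) → ℝ) := fun a i => ((a.1 i : ℕ) : ℝ) / N
  have hNR : (0 : ℝ) < N := by exact_mod_cast hN
  have hg : ∀ a, g a ∈ stdSimplex ℝ (Fin (n + 1)) := by
    intro a
    refine ⟨fun i => by positivity, ?_⟩
    have := a.2
    simp only [g]
    rw [← Finset.sum_div, div_eq_one_iff_eq hNR.ne']
    exact_mod_cast this
  let v : Fin (n + 1) → (T ⊕ Fin (n + 1)) → ℤ := fun i x => match x with
    | Sum.inl a => ((a.1 i : ℕ) : ℤ) * K + ((e a : ℕ) : ℤ)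
    | Sum.inr j => if i = j then -1 else ((N : ℤ) + 1) * K + ((j : ℕ) : ℤ)
  have hvl : ∀ i a, v i (Sum.inl a) = ((a.1 i : ℕ) : ℤ) * K + ((e a : ℕ) : ℤ) := fun _ _ => rfl
  have hvr : ∀ i j, v i (Sum.inr j) = if i = j then -1 else ((N : ℤ) + 1) * K + ((j : ℕ) : ℤ) :=
    fun _ _ => rfl
  have hlo : ∀ i a, 0 ≤ v i (Sum.inl a) := fun i a => by rw [hvl]; positivity
  have hhi : ∀ i a, v i (Sum.inl a) < ((N : ℤ) + 1) * K := fun i a => by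
    rw [hvl]
    have h1 : ((a.1 i : ℕ) : ℤ) ≤ N := by have := (a.1 i).2; omega
    have h2 : ((e a : ℕ) : ℤ) < K := by exact_mod_cast (e a).2
    have h3 : ((a.1 i : ℕ) : ℤ) * K ≤ N * K := by gcongr
    linarith
  have hbig : ∀ j : Fin (n+1), (0:ℤ) ≤ ((N : ℤ) + 1) * K + ((j : ℕ) : ℤ) := fun j => by positivity
  have hv : ∀ i, Function.Injective (v i) := by
    intro i x y h
    rcases x with a | j <;> rcases y with b | k
    · rw [hvl, hvl] at h
      have h1 : ((e a : ℕ) : ℤ) = ((e b : ℕ) : ℤ) := by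
        have ha : (((a.1 i : ℕ) : ℤ) * K + ((e a : ℕ) : ℤ)) % K = ((e a : ℕ) : ℤ) := by
          rw [add_comm, Int.add_mul_emod_self_right]
          exact Int.emod_eq_of_lt (by positivity) (by exact_mod_cast (e a).2)
        have hb : (((b.1 i : ℕ) : ℤ) * K + ((e b : ℕ) : ℤ)) % K = ((e b : ℕ) : ℤ) := by
          rw [add_comm, Int.add_mul_emod_self_right]
          exact Int.emod_eq_of_lt (by positivity) (by exact_mod_cast (e b).2)
        rw [← ha, ← hb, h]
      congr 1
      exact e.injective (Fin.ext (by exact_mod_cast h1))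
    · exfalso
      have h3 := hlo i a; have h4 := hhi i a
      rw [h, hvr] at h3 h4
      split_ifs at h3 h4 <;> omega
    · exfalso
      have h3 := hlo i b; have h4 := hhi i b
      rw [← h, hvr] at h3 h4
      split_ifs at h3 h4 <;> omega
    · rw [hvr, hvr] at h
      congr 1
      have := hbig j; have := hbig k
      split_ifs at h with h1 h2 h2
      · rw [← h1, ← h2]
      · omega
      · omega
      · apply Fin.ext; omega
  have h1 : ∀ i x, v i (Sum.inr i) ≤ v i x := by
    intro i x
    rw [hvr, if_pos rfl]
    rcases x with a | j
    · have := hlo i a; omega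
    · rw [hvr]; have := hbig j; split_ifs <;> omega
  have h2 : ∀ i j x, i ≠ j → (∀ k, x ≠ Sum.inr k) → v i x < v i (Sum.inr j) := by
    intro i j x hij hx
    rcases x with a | k
    · have := hhi i a
      rw [hvr, if_neg hij]; omega
    · exact absurd rfl (hx k)
  let mk : ∀ b : Fin (n + 1) → ℕ, ∑ i, b i = N → T := fun b hb =>
    ⟨fun i => ⟨b i, by
      have : b i ≤ ∑ i, b i := Finset.single_le_sum (f := b) (fun _ _ => Nat.zero_le _) (Finset.mem_univ i)
      omega⟩, hb⟩
  let t0 : T := mk (fun i => if i = 0 then N else 0) (by simp)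
  obtain ⟨R, hd, him⟩ := scarf_lemma v hv Sum.inr h1 h2 (Sum.inl t0) (by simp)
    (fun x => match x with | Sum.inl a => c (g a) | Sum.inr j => j) (by simp)
  let C : Finset (Fin (n + 1)) := Finset.univ.filter fun i => Sum.inr i ∉ R
  -- dominance on T
  have hdom : ∀ y : T, ∃ i ∈ C, ∀ a : T, Sum.inl a ∈ R → (y.1 i : ℕ) ≤ (a.1 i : ℕ) := by
    intro y
    obtain ⟨i, hi⟩ := hd (Sum.inl y)
    refine ⟨i, ?_, ?_⟩
    · simp only [C, Finset.mem_filter, Finset.mem_univ, true_and]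
      intro h
      have h3 := hi _ h
      have h4 := hlo i y
      rw [hvr, if_pos rfl] at h3
      omega
    · intro a ha
      have h3 := hi _ ha
      rw [hvl, hvl] at h3
      by_contra hcon
      push Not at hcon
      have h4 : ((a.1 i : ℕ) : ℤ) + 1 ≤ ((y.1 i : ℕ) : ℤ) := by exact_mod_cast hcon
      have h5 : ((e a : ℕ) : ℤ) < K := by exact_mod_cast (e a).2
      have h6 : (((a.1 i : ℕ) : ℤ) + 1) * K ≤ ((y.1 i : ℕ) : ℤ) * K := by gcongr
      have h7 : (0 : ℤ) ≤ ((e y : ℕ) : ℤ) := by positivity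
      linarith
  have hcol : ∀ i ∈ C, ∃ a : T, Sum.inl a ∈ R ∧ c (g a) = i := by
    intro i hi
    have : i ∈ R.image (fun x : T ⊕ Fin (n+1) => match x with | Sum.inl a => c (g a) | Sum.inr j => j) := by
      rw [him]; exact Finset.mem_univ _
    obtain ⟨x, hx, hxc⟩ := Finset.mem_image.mp this
    rcases x with a | j
    · exact ⟨a, hx, hxc⟩
    · exfalso
      simp only at hxc
      subst hxc
      exact (Finset.mem_filter.mp hi).2 hx
  obtain ⟨i1, hi1, -⟩ := hdom t0
  obtain ⟨a0, ha0, -⟩ := hcol i1 hi1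
  let RT : Finset T := Finset.univ.filter fun a => Sum.inl a ∈ R
  have hmin : ∀ i, ∃ a ∈ RT, ∀ b ∈ RT, (a.1 i : ℕ) ≤ (b.1 i : ℕ) := fun i =>
    Finset.exists_min_image RT (fun a => (a.1 i : ℕ)) ⟨a0, by simpa [RT] using ha0⟩
  choose μ hμR hμ using hmin
  let M : Fin (n + 1) → ℕ := fun i => ((μ i).1 i : ℕ)
  have hM : ∀ a : T, Sum.inl a ∈ R → ∀ i, M i ≤ (a.1 i : ℕ) := fun a ha i =>
    hμ i a (by simpa [RT] using ha)
  have hCsum : N < ∑ i ∈ C, (M i + 1) := by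
    by_contra hcon
    push Not at hcon
    let b : Fin (n + 1) → ℕ := fun i => (if i ∈ C then M i + 1 else 0) +
      (if i = i1 then N - ∑ i ∈ C, (M i + 1) else 0)
    have hb : ∑ i, b i = N := by
      simp only [b, Finset.sum_add_distrib, Finset.sum_ite_mem, Finset.univ_inter,
        Finset.sum_ite_eq', Finset.mem_univ, if_true]
      rw [← Finset.sum_add_distrib]
      omega
    obtain ⟨i, hiC, hi⟩ := hdom (mk b hb)
    have h3 := hi (μ i) (by simpa [RT] using hμR i)
    have h4 : M i + 1 ≤ b i := by simp only [b, if_pos hiC]; omega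
    have h5 : ((mk b hb).1 i : ℕ) = b i := rfl
    simp only [M] at h4
    omega
  have hCsum' : N < ∑ i ∈ C, M i + (n + 1) := by
    rw [Finset.sum_add_distrib] at hCsum
    have : C.card ≤ n + 1 := by simpa using Finset.card_le_univ C
    simp at hCsum
    omega
  have hup : ∀ a : T, Sum.inl a ∈ R → ∀ i, (i ∈ C → (a.1 i : ℕ) ≤ M i + (n + 1)) ∧
      (i ∉ C → (a.1 i : ℕ) ≤ n + 1) := by
    intro a ha i
    have hs := a.2
    constructor
    · intro hi
      have h3 : ∑ j ∈ C, (a.1 j : ℕ) ≤ N := by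
        exact (Finset.sum_le_univ_sum_of_nonneg (fun _ => Nat.zero_le _)).trans hs.le
      rw [← Finset.add_sum_erase _ _ hi] at h3
      rw [← Finset.add_sum_erase _ _ hi] at hCsum'
      have h4 : ∑ j ∈ C.erase i, M j ≤ ∑ j ∈ C.erase i, (a.1 j : ℕ) :=
        Finset.sum_le_sum fun j _ => hM a ha j
      omega
    · intro hi
      have h3 : ∑ j ∈ insert i C, (a.1 j : ℕ) ≤ N := by
        exact (Finset.sum_le_univ_sum_of_nonneg (fun _ => Nat.zero_le _)).trans hs.le
      rw [Finset.sum_insert hi] at h3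
      have h4 : ∑ j ∈ C, M j ≤ ∑ j ∈ C, (a.1 j : ℕ) :=
        Finset.sum_le_sum fun j _ => hM a ha j
      omega
  refine ⟨g a0, hg a0, fun i hi => ?_⟩
  have hiC : i ∈ C := by
    by_contra h
    have h3 := (hup a0 ha0 i).2 h
    simp only [g] at hi
    rw [div_lt_div_iff_of_pos_right hNR] at hi
    have : ((a0.1 i : ℕ) : ℝ) ≤ n + 1 := by exact_mod_cast h3
    linarith
  obtain ⟨a, ha, hac⟩ := hcol i hiC
  refine ⟨g a, hg a, hac, fun j => ?_⟩
  simp only [g]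
  rw [← sub_div, abs_div, abs_of_pos hNR]
  gcongr
  have key : ∀ a b : T, Sum.inl a ∈ R → Sum.inl b ∈ R → (a.1 j : ℕ) ≤ (b.1 j : ℕ) + (n + 1) := by
    intro a b ha hb
    by_cases hj : j ∈ C
    · have := (hup a ha j).1 hj; have := hM b hb j; omega
    · have := (hup a ha j).2 hj; omega
  have k1 : ((a.1 j : ℕ) : ℝ) ≤ (a0.1 j : ℕ) + (n + 1) := by exact_mod_cast key a a0 ha ha0
  have k2 : ((a0.1 j : ℕ) : ℝ) ≤ (a.1 j : ℕ) + (n + 1) := by exact_mod_cast key a0 a ha0 ha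
  rw [abs_le]
  constructor <;> linarith

theorem simplex_complementarity (n : ℕ) (w : (Fin (n + 1) → ℝ) → Fin (n + 1) → ℝ)
    (hw : ∀ i, ContinuousOn (fun y => w y i) (stdSimplex ℝ (Fin (n + 1)))) :
    ∃ y ∈ stdSimplex ℝ (Fin (n + 1)), ∀ i, 0 < y i → ∀ k, w y i ≤ w y k := by
  have hc : ∀ y, ∃ i, ∀ k, w y i ≤ w y k := fun y => by
    obtain ⟨i, -, hi⟩ := Finset.exists_min_image Finset.univ (w y) ⟨0, Finset.mem_univ _⟩
    exact ⟨i, fun k => hi k (Finset.mem_univ _)⟩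
  choose c hc using hc
  choose p hp hq using fun N : ℕ => scarf_grid n (N + 1) N.succ_pos c
  obtain ⟨y, hy, φ, hφ, hlim⟩ := (isCompact_stdSimplex ℝ (Fin (n + 1))).tendsto_subseq hp
  refine ⟨y, hy, fun i hi k => ?_⟩
  have hδ : Filter.Tendsto (fun N : ℕ => ((n : ℝ) + 1) / ((φ N + 1 : ℕ) : ℝ)) Filter.atTop (nhds 0) := by
    have : Filter.Tendsto (fun N : ℕ => ((n : ℝ) + 1) / ((N + 1 : ℕ) : ℝ)) Filter.atTop (nhds 0) :=
      ((tendsto_const_div_atTop_nhds_zero_nat ((n : ℝ) + 1)).comp (Filter.tendsto_add_atTop_nat 1))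
    exact this.comp hφ.tendsto_atTop
  have hpi : ∀ j, Filter.Tendsto (fun N => p (φ N) j) Filter.atTop (nhds (y j)) := fun j =>
    (tendsto_pi_nhds.mp hlim) j
  have hev : ∀ᶠ N in Filter.atTop, ((n : ℝ) + 1) / ((φ N + 1 : ℕ) : ℝ) < p (φ N) i :=
    hδ.eventually_lt (hpi i) hi
  have hex : ∀ N, ∃ q ∈ stdSimplex ℝ (Fin (n + 1)),
      ((n : ℝ) + 1) / ((φ N + 1 : ℕ) : ℝ) < p (φ N) i → 
      c q = i ∧ ∀ j, |q j - p (φ N) j| ≤ ((n : ℝ) + 1) / ((φ N + 1 : ℕ) : ℝ) := by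
    intro N
    by_cases h : ((n : ℝ) + 1) / ((φ N + 1 : ℕ) : ℝ) < p (φ N) i
    · obtain ⟨q, h1, h2⟩ := hq (φ N) i h
      exact ⟨q, h1, fun _ => h2⟩
    · exact ⟨y, hy, fun h' => absurd h' h⟩
  choose q hqΔ hq' using hex
  have hqlim : Filter.Tendsto q Filter.atTop (nhds y) := by
    rw [tendsto_pi_nhds]
    intro j
    have h0 : Filter.Tendsto (fun N => q N j - p (φ N) j) Filter.atTop (nhds 0) := by
      apply squeeze_zero_norm' _ hδ
      filter_upwards [hev] with N hN
      exact (hq' N hN).2 j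
    simpa using h0.add (hpi j)
  have hqlim' : Filter.Tendsto q Filter.atTop (nhdsWithin y (stdSimplex ℝ (Fin (n + 1)))) :=
    tendsto_nhdsWithin_iff.mpr ⟨hqlim, Filter.Eventually.of_forall hqΔ⟩
  refine le_of_tendsto_of_tendsto ((hw i y hy).tendsto.comp hqlim') ((hw k y hy).tendsto.comp hqlim') ?_
  filter_upwards [hev] with N hN
  have := hc (q N) k
  rw [(hq' N hN).1] at this
  exact this

/-- offsets of the point `x` from the lattice point `v`, with an extra zero coordinate -/
def kuhnT {d : ℕ} (v : Fin d → ℤ) (x : Fin d → ℝ) : Fin (d + 1) → ℝ :=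
  Fin.cons 0 (fun i => x i - v i)

theorem kuhn_card {d : ℕ} (x : Fin d → ℝ) (F : Finset (Fin d → ℤ))
    (hF : ∀ v ∈ F, ∀ i j, kuhnT v x i - kuhnT v x j < 1) : F.card ≤ d + 1 := by
  have hc : ∀ v : Fin d → ℤ, ∃ i, ∀ k, kuhnT v x i ≤ kuhnT v x k := fun v => by
    obtain ⟨i, -, hi⟩ := Finset.exists_min_image Finset.univ (kuhnT v x) ⟨0, Finset.mem_univ _⟩
    exact ⟨i, fun k => hi k (Finset.mem_univ _)⟩
  choose a ha using hc
  have : F.card ≤ (Finset.univ : Finset (Fin (d + 1))).card := by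
    apply Finset.card_le_card_of_injOn a (fun _ _ => Finset.mem_univ _)
    intro v hv u hu h
    have hV : ∀ i, ∃ z : ℤ, kuhnT v x i - kuhnT u x i = z := by
      intro i
      refine Fin.cases ?_ (fun i => ?_) i
      · exact ⟨0, by simp [kuhnT]⟩
      · exact ⟨u i - v i, by simp [kuhnT]⟩
    have hconst : ∀ i, kuhnT v x i - kuhnT u x i = kuhnT v x (a v) - kuhnT u x (a v) := by
      intro i
      obtain ⟨z, hz⟩ := hV i
      obtain ⟨z', hz'⟩ := hV (a v)
      have h1 := hF v hv i (a v)
      have h2 := ha v i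
      have h3 := hF u hu i (a u)
      have h4 := ha u i
      rw [← h] at h3 h4
      have h5 : z < z' + 1 := by
        have : (z : ℝ) < z' + 1 := by linarith
        exact_mod_cast this
      have h6 : z' < z + 1 := by
        have : (z' : ℝ) < z + 1 := by linarith
        exact_mod_cast this
      have : z = z' := by omega
      rw [hz, hz', this]
    funext i
    have h1 := hconst i.succ
    have h0 := hconst 0
    rw [← h0] at h1
    simp only [kuhnT, Fin.cons_succ, Fin.cons_zero] at h1
    have : (v i : ℝ) = u i := by linarith
    exact_mod_cast this
  simpa using this

theorem kuhn_floor {d : ℕ} (x : Fin d → ℝ) (i j : Fin (d + 1)) :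
    kuhnT (fun k => ⌊x k⌋) x i - kuhnT (fun k => ⌊x k⌋) x j < 1 := by
  have h : ∀ i, 0 ≤ kuhnT (fun k => ⌊x k⌋) x i ∧ kuhnT (fun k => ⌊x k⌋) x i < 1 := by
    intro i
    refine Fin.cases ?_ (fun i => ?_) i
    · simp [kuhnT]
    · simp only [kuhnT, Fin.cons_succ]
      have := Int.floor_le (x i)
      have := Int.lt_floor_add_one (x i)
      constructor <;> linarith
  linarith [(h i).2, (h j).1]

theorem central_point_aux (d r : ℕ) 
    (m : ℕ) (hm : m = (d + 1) * (r - 1))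
    (f : (Fin (m + 1) → ℝ) → (Fin d → ℝ))
    (hf : ContinuousOn f (stdSimplex ℝ (Fin (m + 1)))) :
    ∃ z, ∀ S : Finset (Fin (m + 1)), S.card = d * (r - 1) + 1 →
      z ∈ f '' {x ∈ stdSimplex ℝ (Fin (m + 1)) | ∀ i ∉ S, x i = 0} := by
  classical
  by_contra hcon
  push Not at hcon
  set Δ := stdSimplex ℝ (Fin (m + 1)) with hΔ
  have hΔc : IsCompact Δ := isCompact_stdSimplex ℝ _
  let A : Finset (Fin (m + 1)) → Set (Fin d → ℝ) := fun S => f '' {x ∈ Δ | ∀ i ∉ S, x i = 0}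
  have hA : ∀ S, IsClosed (A S) := by
    intro S
    apply IsCompact.isClosed
    apply IsCompact.image_of_continuousOn
    · have : {x ∈ Δ | ∀ i ∉ S, x i = 0} = Δ ∩ ⋂ i ∈ {i | i ∉ S}, {x | x i = 0} := by
        ext x; simp
      rw [this]
      apply hΔc.inter_right
      apply isClosed_biInter
      intro i _
      exact isClosed_eq (continuous_apply i) continuous_const
    · exact hf.mono fun x hx => hx.1
  have hK : IsCompact (f '' Δ) := hΔc.image_of_continuousOn hf
  obtain ⟨δ, hδ, hleb⟩ := lebesgue_number_lemma_of_metric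
    (c := fun S : {S : Finset (Fin (m + 1)) // S.card = d * (r - 1) + 1} => (A S.1)ᶜ) hK
    (fun S => (hA S.1).isOpen_compl) (by
      intro z _
      obtain ⟨S, hS, hz⟩ := hcon z
      exact Set.mem_iUnion.mpr ⟨⟨S, hS⟩, hz⟩)
  let L : ℝ := 3 / δ
  have hL : 0 < L := by positivity
  let g : (Fin (m + 1) → ℝ) → (Fin d → ℝ) := fun y i => L * f y i
  have hgc : ∀ i, ContinuousOn (fun y => g y i) Δ := fun i =>
    continuousOn_const.mul ((continuous_apply i).comp_continuousOn hf)
  have hS : ∀ v : Fin d → ℤ, ∃ S : Finset (Fin (m + 1)), S.card = d * (r - 1) + 1 ∧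
      ∀ y ∈ Δ, (∀ i j, kuhnT v (g y) i - kuhnT v (g y) j < 1) → f y ∉ A S := by
    intro v
    by_cases h : ∃ y ∈ Δ, ∀ i j, kuhnT v (g y) i - kuhnT v (g y) j < 1
    · obtain ⟨y, hy, hya⟩ := h
      obtain ⟨S, hS⟩ := hleb (f y) ⟨y, hy, rfl⟩
      refine ⟨S.1, S.2, fun y' hy' hya' => ?_⟩
      apply hS
      rw [Metric.mem_ball, dist_pi_lt_iff hδ]
      intro i
      have a1 := hya i.succ 0
      have a2 := hya 0 i.succ
      have a3 := hya' i.succ 0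
      have a4 := hya' 0 i.succ
      simp only [kuhnT, Fin.cons_succ, Fin.cons_zero, g] at a1 a2 a3 a4
      rw [Real.dist_eq]
      have h3 : L * |f y' i - f y i| < L * δ := by
        rw [← abs_of_pos hL, ← abs_mul, abs_of_pos hL]
        have : L * δ = 3 := by simp only [L]; field_simp
        rw [this, abs_lt]
        constructor <;> linarith
      exact lt_of_mul_lt_mul_left h3 hL.le
    · obtain ⟨S, hS⟩ := hleb (f (Pi.single 0 1)) ⟨_, single_mem_stdSimplex ℝ _, rfl⟩
      exact ⟨S.1, S.2, fun y hy hya => absurd ⟨y, hy, hya⟩ h⟩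
  choose S hScard hSA using hS
  obtain ⟨B, hB⟩ := hK.isBounded.exists_norm_le
  let M : ℤ := ⌈L * B + 1⌉
  let Box : Finset (Fin d → ℤ) := Fintype.piFinset fun _ => Finset.Icc (-M) M
  let φ : (Fin d → ℤ) → (Fin (m + 1) → ℝ) → ℝ := fun v y =>
    ∏ i, ∏ j, max 0 (1 - (kuhnT v (g y) i - kuhnT v (g y) j))
  have hφ0 : ∀ v y, 0 ≤ φ v y := fun v y =>
    Finset.prod_nonneg fun i _ => Finset.prod_nonneg fun j _ => le_max_left _ _
  have hφpos : ∀ v y, 0 < φ v y ↔ ∀ i j, kuhnT v (g y) i - kuhnT v (g y) j < 1 := by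
    intro v y
    constructor
    · intro h i j
      by_contra hcon
      push Not at hcon
      apply h.ne'
      apply Finset.prod_eq_zero (Finset.mem_univ i)
      apply Finset.prod_eq_zero (Finset.mem_univ j)
      exact max_eq_left (by linarith)
    · intro h
      exact Finset.prod_pos fun i _ => Finset.prod_pos fun j _ =>
        lt_max_of_lt_right (by linarith [h i j])
  have hkc : ∀ v i, ContinuousOn (fun y => kuhnT v (g y) i) Δ := by
    intro v i
    refine Fin.cases ?_ (fun i => ?_) i
    · simpa [kuhnT] using continuousOn_const
    · simp only [kuhnT, Fin.cons_succ]
      exact (hgc i).sub continuousOn_const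
  have hφc : ∀ v, ContinuousOn (φ v) Δ := by
    intro v
    apply continuousOn_finsetProd
    intro i _
    apply continuousOn_finsetProd
    intro j _
    exact ContinuousOn.sup continuousOn_const (continuousOn_const.sub ((hkc v i).sub (hkc v j)))
  obtain ⟨y, hy, hcomp⟩ := simplex_complementarity m
    (fun y j => ∑ v ∈ Box, φ v y * (if j ∈ S v then 0 else 1)) (by
      intro j
      apply continuousOn_finsetSum
      intro v _
      exact (hφc v).mul continuousOn_const)
  let v0 : Fin d → ℤ := fun k => ⌊g y k⌋
  have hv0 : ∀ i j, kuhnT v0 (g y) i - kuhnT v0 (g y) j < 1 := kuhn_floor (g y)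
  have hv0B : v0 ∈ Box := by
    rw [Fintype.mem_piFinset]
    intro i
    have h1 : |f y i| ≤ B := (norm_le_pi_norm (f y) i).trans (hB _ ⟨y, hy, rfl⟩)
    have h2 : |g y i| ≤ L * B := by
      simp only [g]; rw [abs_mul, abs_of_pos hL]; gcongr
    have h3 := Int.floor_le (g y i)
    have h4 := Int.lt_floor_add_one (g y i)
    have h5 : L * B + 1 ≤ M := Int.le_ceil _
    rw [abs_le] at h2
    rw [Finset.mem_Icc]
    constructor
    · have : (-M : ℝ) ≤ (⌊g y i⌋ : ℝ) := by linarith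
      exact_mod_cast this
    · have : (⌊g y i⌋ : ℝ) ≤ M := by linarith
      exact_mod_cast this
  have hj : ∃ j, j ∉ S v0 ∧ 0 < y j := by
    by_contra h
    push Not at h
    exact hSA v0 y hy hv0 ⟨y, ⟨hy, fun i hi => le_antisymm (h i hi) (hy.1 i)⟩, rfl⟩
  obtain ⟨j, hjS, hjy⟩ := hj
  have hwpos : 0 < ∑ v ∈ Box, φ v y * (if j ∈ S v then 0 else 1) := by
    apply Finset.sum_pos' 
    · intro v _
      exact mul_nonneg (hφ0 v y) (by split_ifs <;> norm_num)
    · exact ⟨v0, hv0B, by rw [if_neg hjS, mul_one]; exact (hφpos v0 y).mpr hv0⟩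
  let F := Box.filter fun v => 0 < φ v y
  have hFc : F.card ≤ d + 1 := kuhn_card (g y) F fun v hv =>
    (hφpos v y).mp (Finset.mem_filter.mp hv).2
  have hcov : (Finset.univ : Finset (Fin (m + 1))) ⊆ F.biUnion fun v => (S v)ᶜ := by
    intro k _
    have h1 := hwpos.trans_le (hcomp j hjy k)
    obtain ⟨v, hv, hne⟩ := Finset.exists_ne_zero_of_sum_ne_zero h1.ne'
    refine Finset.mem_biUnion.mpr ⟨v, Finset.mem_filter.mpr ⟨hv, ?_⟩, ?_⟩
    · exact lt_of_le_of_ne (hφ0 v y) (left_ne_zero_of_mul hne).symm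
    · rw [Finset.mem_compl]
      intro hk
      exact right_ne_zero_of_mul hne (if_pos hk)
  have h1 := Finset.card_le_card hcov
  have h2 : (F.biUnion fun v => (S v)ᶜ).card ≤ F.card * (r - 1) := by
    apply Finset.card_biUnion_le_card_mul
    intro v _
    rw [Finset.card_compl, hScard, Fintype.card_fin, hm, add_mul]
    omega
  have h3 : F.card * (r - 1) ≤ (d + 1) * (r - 1) := Nat.mul_le_mul_right _ hFc
  rw [Finset.card_univ, Fintype.card_fin] at h1
  omega

/-- **Topological Central Point Theorem** for the target space `ℝ^d`.
Let `m = (d+1)(r-1)` and let `f` be a continuous map from the standard `m`-simplex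
to `ℝ^d`.  Then the images under `f` of all faces of `Δ^m` of dimension `d(r-1)`
(i.e. faces spanned by vertex sets `S` with `|S| = d(r-1)+1`) have a common point. -/
theorem topological_central_point_theorem (d r : ℕ) (hd : 1 ≤ d) (hr : 1 ≤ r)
    (m : ℕ) (hm : m = (d + 1) * (r - 1))
    (f : (Fin (m + 1) → ℝ) → EuclideanSpace ℝ (Fin d))
    (hf : ContinuousOn f (stdSimplex ℝ (Fin (m + 1)))) :
    (⋂ S ∈ {S : Finset (Fin (m + 1)) | S.card = d * (r - 1) + 1},
      f '' {x ∈ stdSimplex ℝ (Fin (m + 1)) | ∀ i ∉ S, x i = 0}).Nonempty := by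

  obtain ⟨z, hz⟩ := central_point_aux d r m hm (fun y => (f y).ofLp)
    ((PiLp.continuous_ofLp 2 _).comp_continuousOn hf)
  refine ⟨WithLp.toLp 2 z, Set.mem_iInter₂.mpr fun S hS => ?_⟩
  obtain ⟨y, hy, hyz⟩ := hz S hS
  exact ⟨y, hy, by rw [← hyz]⟩
end

section
/- Let d ≥ 1 be an integer and let r be a prime power (r = p^k for some prime p and integer k ≥ 1). Set m = (d+1)r − 1 and let f : Δ^m → ℝ^d be a continuous map, where Δ^m is the standard m-simplex. Then there exist r nonempty pairwise disjoint subsets S₁, …, S_r of the vertex index set {0, 1, …, m} such that ⋂_{i=1}^{r} f(Δ_{S_i}) ≠ ∅, i.e., there exist r pairwise disjoint faces F₁, …, F_r of Δ^m with ⋂_{i=1}^{r} f(F_i) ≠ ∅. -/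
namespace TT

section Abs
variable {R : Type*} [CommRing R] {C : Type*} [AddCommGroup C] [Module R C] {k : ℕ}

/-- lower the `i`-th entry -/
def dec (a : Fin k → ℕ) (i : Fin k) : Fin k → ℕ := Function.update a i (a i - 1)

/-- Koszul sign -/
def eps (R : Type*) [CommRing R] (a : Fin k → ℕ) (i : Fin k) : R := (-1) ^ (∑ l ∈ Finset.Iio i, a l)

/-- periodic resolution differential -/
noncomputable def D (p : ℕ) (S : Module.End R C) (n : ℕ) : Module.End R C :=
  if Odd n then S - 1 else ∑ j ∈ Finset.range p, S ^ j

/-- total differential of the tensor resolution -/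
noncomputable def Rsum (p : ℕ) (S : Fin k → Module.End R C) (c : (Fin k → ℕ) → C)
    (a : Fin k → ℕ) : C :=
  ∑ i, if a i = 0 then 0 else eps R a i • D p (S i) (a i) (c (dec a i))

theorem dec_self (a : Fin k → ℕ) (i : Fin k) : dec a i i = a i - 1 := by simp [dec]

theorem dec_ne (a : Fin k → ℕ) {i j : Fin k} (h : j ≠ i) : dec a i j = a j := by
  simp [dec, h]

theorem dec_comm (a : Fin k → ℕ) {i j : Fin k} (h : i ≠ j) :
    dec (dec a i) j = dec (dec a j) i := by
  ext l
  by_cases h1 : l = i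
  · subst h1
    rw [dec_ne _ h, dec_self, dec_self, dec_ne _ h]
  · by_cases h2 : l = j
    · subst h2
      rw [dec_self, dec_ne _ h1, dec_ne _ h1, dec_self]
    · rw [dec_ne _ h2, dec_ne _ h1, dec_ne _ h1, dec_ne _ h2]

theorem sum_dec (a : Fin k → ℕ) (i : Fin k) (h : a i ≠ 0) (s : Finset (Fin k)) (hi : i ∈ s) :
    ∑ l ∈ s, a l = ∑ l ∈ s, dec a i l + 1 := by
  rw [← Finset.add_sum_erase s a hi, ← Finset.add_sum_erase s (dec a i) hi, dec_self]
  have : ∑ l ∈ s.erase i, dec a i l = ∑ l ∈ s.erase i, a l :=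
    Finset.sum_congr rfl fun l hl => dec_ne _ (Finset.ne_of_mem_erase hl)
  rw [this]; omega

theorem eps_dec (a : Fin k → ℕ) (i j : Fin k) (h : a i ≠ 0) :
    eps R (dec a i) j = (if i < j then -1 else 1) * eps R a j := by
  unfold eps
  split_ifs with hij
  · rw [sum_dec a i h (Finset.Iio j) (by simpa using hij), pow_succ]; ring
  · have : ∑ l ∈ Finset.Iio j, dec a i l = ∑ l ∈ Finset.Iio j, a l :=
      Finset.sum_congr rfl fun l hl => dec_ne _ (by
        rintro rfl; exact hij (by simpa using hl))
    rw [this, one_mul]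

theorem D_D (p : ℕ) (S : Module.End R C) (hS : S ^ p = 1) (n : ℕ) (h : n ≠ 0) (x : C) :
    D p S n (D p S (n - 1) x) = 0 := by
  have h1 : (S - 1) * (∑ j ∈ Finset.range p, S ^ j) = 0 := by
    rw [mul_geom_sum, hS, sub_self]
  have h2 : (∑ j ∈ Finset.range p, S ^ j) * (S - 1) = 0 := by
    rw [geom_sum_mul, hS, sub_self]
  rw [← Module.End.mul_apply]
  unfold D
  by_cases ho : Odd n
  · have : ¬ Odd (n - 1) := by
      rw [Nat.not_odd_iff_even]; exact Nat.Odd.sub_odd ho odd_one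
    rw [if_pos ho, if_neg this, h1]; rfl
  · have : Odd (n - 1) := by
      rw [Nat.not_odd_iff_even] at ho
      exact Nat.Even.sub_odd (by omega) ho odd_one
    rw [if_neg ho, if_pos this, h2]; rfl

theorem D_commute (p : ℕ) {S T : Module.End R C} (h : Commute S T) (n : ℕ) :
    Commute (D p S n) T := by
  unfold D
  split_ifs
  · exact h.sub_left (Commute.one_left _)
  · exact Commute.sum_left _ _ _ fun j _ => h.pow_left j

theorem D_comm_apply (p : ℕ) {S T : Module.End R C} (h : Commute S T) (n m : ℕ) (x : C) :
    D p S n (D p T m x) = D p T m (D p S n x) := by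
  have := D_commute p (D_commute p h n).symm m
  rw [← Module.End.mul_apply, ← Module.End.mul_apply, this.eq]

theorem Rsum_Rsum (p : ℕ) (S : Fin k → Module.End R C) (hp : ∀ i, S i ^ p = 1)
    (hc : ∀ i j, Commute (S i) (S j)) (c : (Fin k → ℕ) → C) (a : Fin k → ℕ) :
    Rsum p S (Rsum p S c) a = 0 := by
  have key : ∀ i : Fin k, (if a i = 0 then 0 else eps R a i • D p (S i) (a i)
      (Rsum p S c (dec a i))) = ∑ j, if a i = 0 ∨ dec a i j = 0 then 0 else
        (eps R a i * eps R (dec a i) j) • D p (S i) (a i) (D p (S j) (dec a i j)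
          (c (dec (dec a i) j))) := by
    intro i
    split_ifs with h
    · simp [h]
    · simp only [Rsum, map_sum, Finset.smul_sum, h, false_or]
      refine Finset.sum_congr rfl fun j _ => ?_
      split_ifs with h2
      · simp
      · rw [map_smul, smul_smul]
  have e1 : Rsum p S (Rsum p S c) a = ∑ i, (if a i = 0 then 0 else eps R a i • D p (S i) (a i)
      (Rsum p S c (dec a i))) := rfl
  rw [e1, Finset.sum_congr rfl fun i _ => key i, ← Finset.sum_product']
  refine Finset.sum_involution (fun x _ => (x.2, x.1)) ?_ ?_ (by simp) (by simp)
  · rintro ⟨i, j⟩ -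
    dsimp only
    by_cases hij : i = j
    · subst hij
      split_ifs with h
      · simp
      · push Not at h
        rw [dec_self, D_D p (S i) (hp i) _ h.1]; simp
    · rw [dec_ne a (Ne.symm hij), dec_ne a hij]
      by_cases h : a i = 0 ∨ a j = 0
      · rw [if_pos h, if_pos h.symm, add_zero]
      · rw [if_neg h, if_neg (fun h' => h h'.symm)]
        push Not at h
        rw [D_comm_apply p (hc i j), dec_comm a hij, ← add_smul, eps_dec a i j h.1,
          eps_dec a j i h.2]
        have : eps R a i * ((if i < j then -1 else 1) * eps R a j) +
          eps R a j * ((if j < i then -1 else 1) * eps R a i) = 0 := by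
          rcases lt_or_gt_of_ne hij with h1 | h1
          · rw [if_pos h1, if_neg (not_lt.2 h1.le)]; ring
          · rw [if_pos h1, if_neg (not_lt.2 h1.le)]; ring
        rw [this, zero_smul]
  · rintro ⟨i, j⟩ - hne heq
    dsimp only at hne heq
    have hij : i = j := (Prod.ext_iff.1 heq).2
    subst hij
    apply hne
    split_ifs with h
    · rfl
    · push Not at h
      rw [dec_self, D_D p (S i) (hp i) _ h.1]; simp

theorem Rsum_map {C' : Type*} [AddCommGroup C'] [Module R C'] (p : ℕ)
    (S : Fin k → Module.End R C) (S' : Fin k → Module.End R C')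
    (f : C →ₗ[R] C') (hf : ∀ i x, f (S i x) = S' i (f x)) (c : (Fin k → ℕ) → C)
    (a : Fin k → ℕ) : f (Rsum p S c a) = Rsum p S' (fun b => f (c b)) a := by
  have hpow : ∀ i (j : ℕ) x, f ((S i ^ j) x) = (S' i ^ j) (f x) := by
    intro i j
    induction j with
    | zero => intro x; simp
    | succ n ih => intro x; rw [pow_succ', pow_succ', Module.End.mul_apply, Module.End.mul_apply,
        hf, ih]
  unfold Rsum
  rw [map_sum]
  refine Finset.sum_congr rfl fun i _ => ?_
  split_ifs with h
  · simp
  · rw [map_smul]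
    congr 1
    unfold D
    split_ifs
    · simp [hf]
    · simp [LinearMap.sum_apply, map_sum, hpow]

theorem Rsum_congr (p : ℕ) (S : Fin k → Module.End R C) {c c' : (Fin k → ℕ) → C} {a : Fin k → ℕ}
    (h : ∀ i, a i ≠ 0 → c (dec a i) = c' (dec a i)) : Rsum p S c a = Rsum p S c' a := by
  unfold Rsum
  refine Finset.sum_congr rfl fun i _ => ?_
  split_ifs with h0
  · rfl
  · rw [h i h0]

theorem Rsum_sub (p : ℕ) (S : Fin k → Module.End R C) (c c' : (Fin k → ℕ) → C) (a : Fin k → ℕ) :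
    Rsum p S (fun b => c b - c' b) a = Rsum p S c a - Rsum p S c' a := by
  unfold Rsum
  rw [← Finset.sum_sub_distrib]
  refine Finset.sum_congr rfl fun i _ => ?_
  split_ifs with h0
  · simp
  · rw [map_sub, smul_sub]

/-- boundary prescription -/
noncomputable def bdry (p : ℕ) (S : Fin k → Module.End R C) (o : C) (c : (Fin k → ℕ) → C)
    (a : Fin k → ℕ) : C := if a = 0 then o else Rsum p S c a

def IsFam (p : ℕ) (S : Fin k → Module.End R C) (bd : Module.End R C) (o : C)
    (c : (Fin k → ℕ) → C) : Prop := ∀ a, bd (c a) = bdry p S o c a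

theorem Rsum_bdry (p : ℕ) (S : Fin k → Module.End R C) (hp : ∀ i, S i ^ p = 1)
    (hc : ∀ i j, Commute (S i) (S j)) (o : C) (ho : ∀ i, S i o = o)
    (c : (Fin k → ℕ) → C) (a : Fin k → ℕ) : Rsum p S (bdry p S o c) a = 0 := by
  by_cases h : ∃ i, a i ≠ 0 ∧ dec a i = 0
  · obtain ⟨i, hi, hd⟩ := h
    have hai : a i = 1 := by
      have := dec_self a i
      rw [hd] at this; simp at this; omega
    have haj : ∀ j, j ≠ i → a j = 0 := by
      intro j hj
      rw [← dec_ne a hj, hd]; rfl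
    unfold Rsum
    refine Finset.sum_eq_zero fun j _ => ?_
    split_ifs with h0
    · rfl
    · have : j = i := by by_contra hj; exact h0 (haj j hj)
      subst this
      rw [hd, hai]
      simp [bdry, D, ho]
  · push Not at h
    rw [← Rsum_Rsum p S hp hc c a]
    apply Rsum_congr
    intro i hi
    simp [bdry, h i hi]

theorem sum_eq_zero_iff' (a : Fin k → ℕ) : ∑ i, a i = 0 ↔ a = 0 := by
  simp [Finset.sum_eq_zero_iff, funext_iff]

theorem fam_cycle (p : ℕ) (S : Fin k → Module.End R C) (hp : ∀ i, S i ^ p = 1)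
    (hc : ∀ i j, Commute (S i) (S j)) (o : C) (ho : ∀ i, S i o = o)
    (bd : Module.End R C) (hbS : ∀ i x, bd (S i x) = S i (bd x)) (hbo : bd o = 0)
    (c : (Fin k → ℕ) → C) (a : Fin k → ℕ)
    (h : ∀ i, a i ≠ 0 → bd (c (dec a i)) = bdry p S o c (dec a i)) :
    bd (bdry p S o c a) = 0 := by
  unfold bdry
  split_ifs with h0
  · exact hbo
  · rw [Rsum_map p S S bd hbS, Rsum_congr p S h, Rsum_bdry p S hp hc o ho]

/-- cone construction -/
noncomputable def cf (p : ℕ) (S : Fin k → Module.End R C) (o : C) (Q : ℕ → C →ₗ[R] C) :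
    ℕ → (Fin k → ℕ) → C
  | 0, _ => Q 0 o
  | n + 1, a => Q (n + 1) (Rsum p S (cf p S o Q n) a)

noncomputable def fam (p : ℕ) (S : Fin k → Module.End R C) (o : C) (Q : ℕ → C →ₗ[R] C)
    (a : Fin k → ℕ) : C := cf p S o Q (∑ i, a i) a

theorem fam_eq (p : ℕ) (S : Fin k → Module.End R C) (o : C) (Q : ℕ → C →ₗ[R] C)
    (a : Fin k → ℕ) : fam p S o Q a = Q (∑ i, a i) (bdry p S o (fam p S o Q) a) := by
  by_cases h : a = 0
  · subst h; simp [fam, bdry, cf]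
  · rw [bdry, if_neg h]
    unfold fam
    obtain ⟨n, hn⟩ : ∃ n, ∑ i, a i = n + 1 := Nat.exists_eq_succ_of_ne_zero
      (fun h' => h ((sum_eq_zero_iff' a).1 h'))
    rw [hn, cf]
    congr 1
    apply Rsum_congr
    intro i hi
    have := sum_dec a i hi Finset.univ (Finset.mem_univ _)
    rw [show ∑ l, dec a i l = n by omega]

theorem fam_isFam (p : ℕ) (S : Fin k → Module.End R C) (hp : ∀ i, S i ^ p = 1)
    (hc : ∀ i j, Commute (S i) (S j)) (o : C) (ho : ∀ i, S i o = o)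
    (bd : Module.End R C) (hbS : ∀ i x, bd (S i x) = S i (bd x)) (hbo : bd o = 0)
    (Q : ℕ → C →ₗ[R] C) (hQ : ∀ n x, bd (Q n x) = x - Q n (bd x)) :
    IsFam p S bd o (fam p S o Q) := by
  have : ∀ n a, ∑ i, a i = n → bd (fam p S o Q a) = bdry p S o (fam p S o Q) a := by
    intro n
    induction n with
    | zero =>
      intro a ha
      rw [fam_eq, hQ, fam_cycle p S hp hc o ho bd hbS hbo, map_zero, sub_zero]
      intro i hi
      exact absurd (congrFun ((sum_eq_zero_iff' a).1 ha) i) hi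
    | succ n ih =>
      intro a ha
      rw [fam_eq, hQ, fam_cycle p S hp hc o ho bd hbS hbo, map_zero, sub_zero]
      intro i hi
      apply ih
      have := sum_dec a i hi Finset.univ (Finset.mem_univ _)
      omega
  intro a; exact this _ a rfl

/-- homotopy -/
noncomputable def hf (p : ℕ) (S : Fin k → Module.End R C) (Q : C →ₗ[R] C)
    (u : (Fin k → ℕ) → C) : ℕ → (Fin k → ℕ) → C
  | 0, a => Q (u a)
  | n + 1, a => Q (u a - Rsum p S (hf p S Q u n) a)

theorem compare (p : ℕ) (S : Fin k → Module.End R C) (hp : ∀ i, S i ^ p = 1)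
    (hc : ∀ i j, Commute (S i) (S j)) (o : C)
    (bd : Module.End R C) (hbS : ∀ i x, bd (S i x) = S i (bd x))
    (Q : C →ₗ[R] C) (hQ : ∀ x, bd (Q x) = x - Q (bd x))
    (c c' : (Fin k → ℕ) → C) (h : IsFam p S bd o c) (h' : IsFam p S bd o c')
    (e : C →ₗ[R] R) (hpR : (p : R) = 0) (heb : ∀ x, e (bd x) = 0) (heS : ∀ i x, e (S i x) = e x)
    (a : Fin k → ℕ) : e (c a) = e (c' a) := by
  set u : (Fin k → ℕ) → C := fun a => c a - c' a with hu
  have hbu : ∀ a, bd (u a) = Rsum p S u a := by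
    intro a
    rw [hu, Rsum_sub]
    simp only [map_sub]
    rw [h a, h' a]
    unfold bdry
    split_ifs with h0
    · subst h0; simp [Rsum]
    · rfl
  have hR0 : ∀ (v : (Fin k → ℕ) → C) a, e (Rsum p S v a) = 0 := by
    intro v a
    have hpow : ∀ i (j : ℕ) x, e ((S i ^ j) x) = e x := by
      intro i j
      induction j with
      | zero => intro x; simp
      | succ n ih => intro x; rw [pow_succ', Module.End.mul_apply, heS, ih]
    unfold Rsum
    rw [map_sum]
    refine Finset.sum_eq_zero fun i _ => ?_
    split_ifs
    · simp
    · rw [map_smul]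
      unfold D
      split_ifs
      · simp [heS]
      · simp [LinearMap.sum_apply, map_sum, hpow, hpR]
  have main : ∀ n a, ∑ i, a i = n →
      bd (hf p S Q u n a) = u a - Rsum p S (fun b => hf p S Q u (∑ i, b i) b) a := by
    intro n
    induction n with
    | zero =>
      intro a ha
      have ha' := (sum_eq_zero_iff' a).1 ha
      have r0 : ∀ v : (Fin k → ℕ) → C, Rsum p S v a = 0 := by intro v; subst ha'; simp [Rsum]
      rw [hf, hQ, hbu, r0, r0, map_zero]
    | succ n ih =>
      intro a ha
      have hs : ∀ i, a i ≠ 0 → ∑ l, dec a i l = n := by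
        intro i hi
        have := sum_dec a i hi Finset.univ (Finset.mem_univ _)
        omega
      have e1 : Rsum p S (fun b => hf p S Q u (∑ i, b i) b) a = Rsum p S (hf p S Q u n) a :=
        Rsum_congr p S fun i hi => by simp only [hs i hi]
      rw [e1, hf, hQ, map_sub, hbu, Rsum_map p S S bd hbS]
      have e2 : Rsum p S (fun b => bd (hf p S Q u n b)) a = Rsum p S (fun b => u b -
          Rsum p S (fun b => hf p S Q u (∑ i, b i) b) b) a :=
        Rsum_congr p S fun i hi => ih _ (hs i hi)
      rw [e2, Rsum_sub p S u (Rsum p S (fun b => hf p S Q u (∑ i, b i) b)), Rsum_Rsum p S hp hc]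
      simp
  have := main _ a rfl
  have h3 := congrArg e this
  rw [heb, map_sub, hR0, sub_zero, hu] at h3
  simp only [map_sub] at h3
  exact (sub_eq_zero.1 h3.symm)

end Abs

end TT

namespace TT
section Chains
variable {R : Type*} [CommRing R] {Z Z' : Type*} {M : Type*} [AddCommGroup M] [Module R M]

abbrev Ch (R : Type*) [CommRing R] (Z : Type*) := List Z →₀ R

noncomputable def gen (R : Type*) [CommRing R] {Z : Type*} (l : List Z) : Ch R Z :=
  Finsupp.single l 1

/-- linear extension -/
noncomputable def lin (u : List Z → M) : Ch R Z →ₗ[R] M := Finsupp.linearCombination R u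

@[simp] theorem lin_gen (u : List Z → M) (l : List Z) : lin u (gen R l) = u l := by
  simp [lin, gen]

theorem ch_ext {f g : Ch R Z →ₗ[R] M} (h : ∀ l, f (gen R l) = g (gen R l)) : f = g := by
  apply Finsupp.lhom_ext'
  intro l
  ext
  exact h l

theorem ch_ext' {f g : Ch R Z →ₗ[R] M} (h : ∀ l, f (gen R l) = g (gen R l)) (x : Ch R Z) :
    f x = g x := by rw [ch_ext h]

noncomputable def con (x : Z) : Ch R Z →ₗ[R] Ch R Z := lin fun l => gen R (x :: l)

noncomputable def mp (f : Z → Z') : Ch R Z →ₗ[R] Ch R Z' := lin fun l => gen R (l.map f)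

@[simp] theorem con_gen (x : Z) (l : List Z) : con x (gen R l) = gen R (x :: l) := lin_gen _ _
@[simp] theorem mp_gen (f : Z → Z') (l : List Z) : mp f (gen R l) = gen R (l.map f) := lin_gen _ _

noncomputable def bdl (R : Type*) [CommRing R] {Z : Type*} : List Z → Ch R Z
  | [] => 0
  | x :: l => gen R l - con x (bdl R l)

noncomputable def bd : Ch R Z →ₗ[R] Ch R Z := lin (bdl R)

@[simp] theorem bd_gen (l : List Z) : bd (gen R l) = bdl R l := lin_gen _ _

theorem bd_con (x : Z) (c : Ch R Z) : bd (con x c) = c - con x (bd c) := by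
  have := ch_ext' (f := bd ∘ₗ con x) (g := LinearMap.id - con x ∘ₗ bd) (fun l => by simp [bdl]) c
  simpa using this

theorem bd_bd (c : Ch R Z) : bd (bd c) = 0 := by
  refine ch_ext' (f := bd ∘ₗ bd) (g := 0) (fun l => ?_) c
  induction l with
  | nil => simp [bdl]
  | cons x l ih =>
    simp only [LinearMap.comp_apply, bd_gen, LinearMap.zero_apply] at ih ⊢
    rw [bdl, map_sub, bd_con, bd_gen, ih]; simp

theorem mp_con (f : Z → Z') (x : Z) (c : Ch R Z) : mp f (con x c) = con (f x) (mp f c) := by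
  exact ch_ext' (f := mp f ∘ₗ con x) (g := con (f x) ∘ₗ mp f) (fun l => by simp) c

theorem bd_mp (f : Z → Z') (c : Ch R Z) : bd (mp f c) = mp f (bd c) := by
  refine ch_ext' (f := bd ∘ₗ mp f) (g := mp f ∘ₗ bd) (fun l => ?_) c
  induction l with
  | nil => simp [bdl]
  | cons x l ih =>
    simp only [LinearMap.comp_apply, bd_gen, mp_gen] at ih ⊢
    rw [List.map_cons, bdl, bdl, map_sub, mp_con, ih, mp_gen]

theorem mp_mp {Z'' : Type*} (g : Z' → Z'') (f : Z → Z') (c : Ch R Z) :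
    mp g (mp f c) = mp (fun x => g (f x)) c := by
  refine ch_ext' (f := mp g ∘ₗ mp f) (g := mp fun x => g (f x)) (fun l => ?_) c
  simp [Function.comp_def]

theorem mp_id (c : Ch R Z) : mp (fun x => x) c = c := by
  refine ch_ext' (f := mp fun x => x) (g := LinearMap.id) (fun l => ?_) c
  simp

theorem mp_pow (f : Z → Z) (n : ℕ) (c : Ch R Z) :
    ((mp f : Module.End R (Ch R Z)) ^ n) c = mp (f^[n]) c := by
  induction n generalizing c with
  | zero => simp; exact (mp_id c).symm
  | succ n ih => rw [pow_succ, Module.End.mul_apply, ih, mp_mp]; rfl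

/-- chains supported on lists satisfying `P` -/
def Sup (P : List Z → Prop) : Submodule R (Ch R Z) := Finsupp.supported R R {l | P l}

theorem gen_mem {P : List Z → Prop} {l : List Z} (h : P l) : gen R l ∈ Sup (R := R) P :=
  Finsupp.single_mem_supported R _ h

theorem lin_mem {P : List Z → Prop} {u : List Z → M} {V : Submodule R M}
    (h : ∀ l, P l → u l ∈ V) {c : Ch R Z} (hc : c ∈ Sup (R := R) P) : lin u c ∈ V := by
  unfold lin
  rw [Finsupp.linearCombination_apply]
  refine Submodule.sum_mem _ fun l hl => Submodule.smul_mem _ _ (h l ?_)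
  exact (Finsupp.mem_supported R c).1 hc hl

theorem exists_of_ne {P : List Z → Prop} {u : List Z → R} {c : Ch R Z}
    (hc : c ∈ Sup (R := R) P) (h : lin u c ≠ 0) : ∃ l, P l ∧ u l ≠ 0 := by
  by_contra hcon
  push Not at hcon
  apply h
  have := lin_mem (u := u) (V := ⊥) (fun l hl => by simpa using hcon l hl) hc
  simpa using this

theorem con_mem {P P' : List Z → Prop} (x : Z) (h : ∀ l, P l → P' (x :: l)) {c : Ch R Z}
    (hc : c ∈ Sup (R := R) P) : con x c ∈ Sup (R := R) P' :=
  lin_mem (fun l hl => gen_mem (h l hl)) hc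

theorem mp_mem {P : List Z → Prop} {P' : List Z' → Prop} (f : Z → Z') (h : ∀ l, P l → P' (l.map f))
    {c : Ch R Z} (hc : c ∈ Sup (R := R) P) : mp f c ∈ Sup (R := R) P' :=
  lin_mem (fun l hl => gen_mem (h l hl)) hc

theorem bdl_mem (l : List Z) :
    bdl R l ∈ Sup (R := R) (fun l' => l'.length + 1 = l.length ∧ ∀ x ∈ l', x ∈ l) := by
  induction l with
  | nil => exact Submodule.zero_mem _
  | cons x l ih =>
    rw [bdl]
    refine Submodule.sub_mem _ (gen_mem ⟨rfl, fun y hy => List.mem_cons_of_mem _ hy⟩)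
      (con_mem x ?_ ih)
    rintro l' ⟨h1, h2⟩
    refine ⟨by simp [h1], fun y hy => ?_⟩
    rcases List.mem_cons.1 hy with rfl | hy
    · exact List.mem_cons_self
    · exact List.mem_cons_of_mem _ (h2 y hy)

theorem Sup_mono {P P' : List Z → Prop} (h : ∀ l, P l → P' l) {c : Ch R Z}
    (hc : c ∈ Sup (R := R) P) : c ∈ Sup (R := R) P' :=
  Finsupp.supported_mono (fun l hl => h l hl) hc

/-- subdivision with center function `b` -/
noncomputable def sdl (R : Type*) [CommRing R] {Z : Type*} (b : List Z → Z) : ℕ → List Z → Ch R Z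
  | 0, l => gen R l
  | n + 1, l => con (b l) (lin (sdl R b n) (bdl R l))

noncomputable def sd (b : List Z → Z) : Ch R Z →ₗ[R] Ch R Z := lin fun l => sdl R b l.length l

theorem lin_congr {P : List Z → Prop} {u v : List Z → M} (h : ∀ l, P l → u l = v l) {c : Ch R Z}
    (hc : c ∈ Sup (R := R) P) : lin u c = lin v c := by
  have : lin (fun l => u l - v l) c ∈ (⊥ : Submodule R M) :=
    lin_mem (fun l hl => by simp [h l hl]) hc
  have h2 : lin (fun l => u l - v l) c = lin u c - lin v c := by
    exact ch_ext' (f := lin fun l => u l - v l) (g := lin u - lin v) (fun l => by simp) c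
  rw [h2] at this
  exact sub_eq_zero.1 (by simpa using this)

theorem sd_nil (b : List Z → Z) : sd b (gen R []) = gen R [] := by simp [sd, sdl]

theorem sd_gen (b : List Z → Z) (l : List Z) (h : l ≠ []) :
    sd b (gen R l) = con (b l) (sd b (bdl R l)) := by
  obtain ⟨x, l, rfl⟩ := List.exists_cons_of_ne_nil h
  have : sd b (bdl R (x :: l)) = lin (sdl R b l.length) (bdl R (x :: l)) := by
    unfold sd
    refine lin_congr (fun l' hl' => ?_) (bdl_mem (x :: l))
    have : l'.length = l.length := by simpa using hl'.1
    rw [this]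
  rw [this]
  simp [sd, sdl]

theorem bd_sd_aux (b : List Z → Z) (n : ℕ) : ∀ l : List Z, l.length = n →
    bd (sd b (gen R l)) = sd b (bdl R l) := by
  induction n with
  | zero =>
    intro l hl
    rw [List.length_eq_zero_iff] at hl
    subst hl
    simp [sd_nil, bdl]
  | succ n ih =>
    intro l hl
    have hne : l ≠ [] := by rintro rfl; simp at hl
    rw [sd_gen b l hne, bd_con]
    have : bd (sd b (bdl R l)) = sd b (bd (bdl R l)) := by
      have h0 : (bd ∘ₗ sd b - sd b ∘ₗ bd : Ch R Z →ₗ[R] Ch R Z) (bdl R l) = 0 := by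
        have e : (bd ∘ₗ sd b - sd b ∘ₗ bd : Ch R Z →ₗ[R] Ch R Z)
            = lin (fun l' => bd (sd b (gen R l')) - sd b (bdl R l')) :=
          ch_ext fun l' => by simp
        rw [e]
        have := lin_mem (u := fun l' => bd (sd b (gen R l')) - sd b (bdl R l'))
          (V := (⊥ : Submodule R (Ch R Z))) (fun l' hl' => ?_) (bdl_mem (R := R) l)
        · simpa using this
        · rw [Submodule.mem_bot, ih l' (by omega), sub_self]
      exact sub_eq_zero.1 h0
    rw [this, ← bd_gen, bd_bd]; simp

theorem bd_sd (b : List Z → Z) (c : Ch R Z) : bd (sd b c) = sd b (bd c) :=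
  ch_ext' (f := bd ∘ₗ sd b) (g := sd b ∘ₗ bd) (fun l => by
    simpa using bd_sd_aux b l.length l rfl) c

theorem sd_mp_aux (b : List Z → Z) (f : Z → Z) (hb : ∀ l, l ≠ [] → b (l.map f) = f (b l)) (n : ℕ) :
    ∀ l : List Z, l.length = n → sd b (mp f (gen R l)) = mp f (sd b (gen R l)) := by
  induction n with
  | zero =>
    intro l hl
    rw [List.length_eq_zero_iff] at hl
    subst hl
    simp [sd_nil]
  | succ n ih =>
    intro l hl
    have hne : l ≠ [] := by rintro rfl; simp at hl
    rw [mp_gen, sd_gen b l hne, sd_gen b (l.map f) (by simpa using hne), hb l hne, mp_con]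
    have e0 : bdl R (l.map f) = mp f (bdl R l) := by
      rw [← bd_gen, ← mp_gen, bd_mp, bd_gen]
    rw [e0]
    congr 1
    have e : (sd b ∘ₗ mp f - mp f ∘ₗ sd b : Ch R Z →ₗ[R] Ch R Z)
        = lin (fun l' => sd b (mp f (gen R l')) - mp f (sd b (gen R l'))) :=
      ch_ext fun l' => by simp
    have h0 : (sd b ∘ₗ mp f - mp f ∘ₗ sd b : Ch R Z →ₗ[R] Ch R Z) (bdl R l) = 0 := by
      rw [e]
      have := lin_mem (u := fun l' => sd b (mp f (gen R l')) - mp f (sd b (gen R l')))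
        (V := (⊥ : Submodule R (Ch R Z))) (fun l' hl' => ?_) (bdl_mem (R := R) l)
      · simpa using this
      · rw [Submodule.mem_bot, ih l' (by omega), sub_self]
    exact sub_eq_zero.1 h0

theorem sd_mp (b : List Z → Z) (f : Z → Z) (hb : ∀ l, l ≠ [] → b (l.map f) = f (b l)) (c : Ch R Z) :
    sd b (mp f c) = mp f (sd b c) :=
  ch_ext' (f := sd b ∘ₗ mp f) (g := mp f ∘ₗ sd b)
    (fun l => sd_mp_aux b f hb l.length l rfl) c

/-- cup product of 1-cocycles -/
def cup1 : List (Z → Z → R) → List Z → R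
  | [], [_] => 1
  | t :: ts, x :: y :: l => t x y * cup1 ts (y :: l)
  | _, _ => 0

/-- cup product of 2-cocycles -/
def cup2 : List (Z → Z → Z → R) → List Z → R
  | [], [_] => 1
  | t :: ts, x :: y :: z :: l => t x y z * cup2 ts (z :: l)
  | _, _ => 0

theorem lin_con_mul (u v : List Z → R) (x : Z) (a : R) (P : List Z → Prop)
    (h : ∀ l, P l → u (x :: l) = a * v l) (c : Ch R Z) (hc : c ∈ Sup (R := R) P) :
    lin u (con x c) = a * lin v c := by
  have h1 : lin u (con x c) = lin (fun l => u (x :: l)) c :=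
    ch_ext' (f := lin u ∘ₗ con x) (g := lin fun l => u (x :: l)) (fun l => by simp) c
  have h2 : a * lin v c = lin (fun l => a * v l) c :=
    ch_ext' (f := a • lin v) (g := lin fun l => a * v l) (fun l => by simp) c
  rw [h1, h2]
  exact lin_congr h hc

theorem lin_con_mul' (u v : List Z → R) (x : Z) (a : R)
    (h : ∀ l, u (x :: l) = a * v l) (c : Ch R Z) : lin u (con x c) = a * lin v c :=
  lin_con_mul u v x a (fun _ => True) (fun l _ => h l) c
    (by unfold Sup; simp)

theorem cup1_cons2 (t : Z → Z → R) (ts) (x y : Z) (c : Ch R Z) :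
    lin (cup1 (t :: ts)) (con x (con y c)) = t x y * lin (cup1 ts) (con y c) := by
  have h1 := ch_ext' (f := lin (cup1 (t :: ts)) ∘ₗ con x ∘ₗ con y)
    (g := (t x y) • (lin (cup1 ts) ∘ₗ con y)) (fun l => by simp [cup1]) c
  simpa using h1

theorem cup2_cons3 (t : Z → Z → Z → R) (ts) (x y z : Z) (c : Ch R Z) :
    lin (cup2 (t :: ts)) (con x (con y (con z c))) = t x y z * lin (cup2 ts) (con z c) := by
  have h1 := ch_ext' (f := lin (cup2 (t :: ts)) ∘ₗ con x ∘ₗ con y ∘ₗ con z)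
    (g := (t x y z) • (lin (cup2 ts) ∘ₗ con z)) (fun l => by simp [cup2]) c
  simpa using h1

theorem cup1_bd (ts : List (Z → Z → R))
    (h : ∀ t ∈ ts, ∀ x y z, t y z - t x z + t x y = 0) (l : List Z) :
    lin (cup1 ts) (bdl R l) = 0 := by
  induction ts generalizing l with
  | nil =>
    rcases l with _ | ⟨x, _ | ⟨y, _ | ⟨z, l⟩⟩⟩
    · simp [bdl]
    · simp [bdl, cup1]
    · simp [bdl, cup1]
    · have h1 := ch_ext' (R := R) (f := lin (cup1 ([] : List (Z → Z → R))) ∘ₗ con x ∘ₗ con y)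
        (g := 0) (fun l => by simp [cup1])
      simp only [LinearMap.comp_apply, LinearMap.zero_apply] at h1
      have h2 := h1 (gen R l)
      have h3 := h1 (con z (bdl R l))
      simp only [bdl, map_sub, h3, h2, con_gen, lin_gen]
      simp [cup1]
  | cons t ts ih =>
    have ht := h t List.mem_cons_self
    have hg := ih (fun t' ht' => h t' (List.mem_cons_of_mem _ ht'))
    rcases l with _ | ⟨x, _ | ⟨y, _ | ⟨z, l⟩⟩⟩
    · simp [bdl]
    · simp [bdl, cup1]
    · have e0 : cup1 ts ([] : List Z) = 0 := by cases ts <;> rfl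
      have := hg [y]
      simp only [bdl, map_sub, map_zero, con_gen, lin_gen] at this
      simp [bdl, cup1]
    · have h2 := hg (y :: z :: l)
      rw [bdl, map_sub] at h2
      rw [bdl, bdl, map_sub, map_sub, map_sub, cup1_cons2]
      rw [show lin (cup1 ts) (con y (bdl R (z :: l))) = lin (cup1 ts) (gen R (z :: l)) by
        rw [sub_eq_zero] at h2; exact h2.symm]
      simp only [con_gen, lin_gen, cup1]
      linear_combination (cup1 ts (z :: l)) * ht x y z

theorem cup2_bd (ts : List (Z → Z → Z → R))
    (h : ∀ t ∈ ts, ∀ x y z w, t y z w - t x z w + t x y w - t x y z = 0) (l : List Z) :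
    lin (cup2 ts) (bdl R l) = 0 := by
  induction ts generalizing l with
  | nil =>
    rcases l with _ | ⟨x, _ | ⟨y, _ | ⟨z, l⟩⟩⟩
    · simp [bdl]
    · simp [bdl, cup2]
    · simp [bdl, cup2]
    · have h1 := ch_ext' (R := R) (f := lin (cup2 ([] : List (Z → Z → Z → R))) ∘ₗ con x ∘ₗ con y)
        (g := 0) (fun l => by simp [cup2])
      simp only [LinearMap.comp_apply, LinearMap.zero_apply] at h1
      have h2 := h1 (gen R l)
      have h3 := h1 (con z (bdl R l))
      simp only [bdl, map_sub, h3, h2, con_gen, lin_gen]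
      simp [cup2]
  | cons t ts ih =>
    have ht := h t List.mem_cons_self
    have hg := ih (fun t' ht' => h t' (List.mem_cons_of_mem _ ht'))
    rcases l with _ | ⟨x, _ | ⟨y, _ | ⟨z, _ | ⟨w, l⟩⟩⟩⟩
    · simp [bdl]
    · simp [bdl, cup2]
    · simp [bdl, cup2]
    · simp [bdl, cup2]
    · have h2 := hg (z :: w :: l)
      rw [bdl, map_sub] at h2
      rw [bdl, bdl, bdl]
      simp only [map_sub]
      rw [cup2_cons3]
      rw [show lin (cup2 ts) (con z (bdl R (w :: l))) = lin (cup2 ts) (gen R (w :: l)) by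
        rw [sub_eq_zero] at h2; exact h2.symm]
      simp only [con_gen, lin_gen, cup2]
      linear_combination (cup2 ts (w :: l)) * ht x y z w

theorem cup1_mp (ts : List (Z → Z → R)) (f : Z → Z)
    (h : ∀ t ∈ ts, ∀ x y, t (f x) (f y) = t x y) (l : List Z) :
    cup1 ts (l.map f) = cup1 ts l := by
  induction ts generalizing l with
  | nil => rcases l with _ | ⟨x, _ | ⟨y, l⟩⟩ <;> simp [cup1]
  | cons t ts ih =>
    rcases l with _ | ⟨x, _ | ⟨y, l⟩⟩
    · simp [cup1]
    · simp [cup1]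
    · have := ih (fun t' ht' => h t' (List.mem_cons_of_mem _ ht')) (y :: l)
      simp only [List.map_cons] at this
      simp only [List.map_cons, cup1, this, h t List.mem_cons_self]

theorem cup2_mp (ts : List (Z → Z → Z → R)) (f : Z → Z)
    (h : ∀ t ∈ ts, ∀ x y z, t (f x) (f y) (f z) = t x y z) (l : List Z) :
    cup2 ts (l.map f) = cup2 ts l := by
  induction ts generalizing l with
  | nil => rcases l with _ | ⟨x, _ | ⟨y, l⟩⟩ <;> simp [cup2]
  | cons t ts ih =>
    rcases l with _ | ⟨x, _ | ⟨y, _ | ⟨z, l⟩⟩⟩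
    · simp [cup2]
    · simp [cup2]
    · simp [cup2]
    · have := ih (fun t' ht' => h t' (List.mem_cons_of_mem _ ht')) (z :: l)
      simp only [List.map_cons] at this
      simp only [List.map_cons, cup2, this, h t List.mem_cons_self]

/-- nonvanishing cups: every factor is nonzero somewhere -/
theorem cup1_ne (ts : List (Z → Z → R)) (l : List Z) (h : cup1 ts l ≠ 0) :
    ∀ t ∈ ts, ∃ x ∈ l, ∃ y ∈ l, t x y ≠ 0 := by
  induction ts generalizing l with
  | nil => simp
  | cons t ts ih =>
    rcases l with _ | ⟨x, _ | ⟨y, l⟩⟩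
    · simp [cup1] at h
    · simp [cup1] at h
    · rw [cup1] at h
      intro t' ht'
      rcases List.mem_cons.1 ht' with rfl | ht'
      · exact ⟨x, by simp, y, by simp, left_ne_zero_of_mul h⟩
      · obtain ⟨x', hx, y', hy, h'⟩ := ih _ (right_ne_zero_of_mul h) t' ht'
        exact ⟨x', List.mem_cons_of_mem _ hx, y', List.mem_cons_of_mem _ hy, h'⟩

theorem cup2_ne (ts : List (Z → Z → Z → R)) (l : List Z) (h : cup2 ts l ≠ 0) :
    ∀ t ∈ ts, ∃ x ∈ l, ∃ y ∈ l, ∃ z ∈ l, t x y z ≠ 0 := by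
  induction ts generalizing l with
  | nil => simp
  | cons t ts ih =>
    rcases l with _ | ⟨x, _ | ⟨y, _ | ⟨z, l⟩⟩⟩
    · simp [cup2] at h
    · simp [cup2] at h
    · simp [cup2] at h
    · rw [cup2] at h
      intro t' ht'
      rcases List.mem_cons.1 ht' with rfl | ht'
      · exact ⟨x, by simp, y, by simp, z, by simp, left_ne_zero_of_mul h⟩
      · obtain ⟨x', hx, y', hy, z', hz, h'⟩ := ih _ (right_ne_zero_of_mul h) t' ht'
        exact ⟨x', List.mem_cons_of_mem _ (List.mem_cons_of_mem _ hx),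
          y', List.mem_cons_of_mem _ (List.mem_cons_of_mem _ hy),
          z', List.mem_cons_of_mem _ (List.mem_cons_of_mem _ hz), h'⟩

end Chains

end TT

namespace TT
section Eval
variable {p : ℕ} {k : ℕ} {Z ι : Type*}

/-- model family -/
noncomputable def model (p : ℕ) (σ : Fin k → Z → Z) (z0 : Z) (a : Fin k → ℕ) : Ch (ZMod p) Z :=
  fam p (fun i => mp (σ i)) (gen (ZMod p) []) (fun _ => con z0) a

theorem model_eq (σ : Fin k → Z → Z) (z0 : Z) (a : Fin k → ℕ) :
    model p σ z0 a = con z0 (bdry p (fun i => mp (σ i)) (gen (ZMod p) []) (model p σ z0) a) :=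
  fam_eq p _ _ _ a

/-- linear form -/
noncomputable def lf (χ : Fin k → ZMod p) : MvPolynomial (Fin k) (ZMod p) :=
  ∑ i, MvPolynomial.C (χ i) * MvPolynomial.X i

theorem coeff_lf (χ : Fin k → ZMod p) (P : MvPolynomial (Fin k) (ZMod p)) (b : Fin k →₀ ℕ) :
    MvPolynomial.coeff b (lf χ * P) =
      ∑ i, if b i = 0 then 0 else χ i * MvPolynomial.coeff (b - Finsupp.single i 1) P := by
  unfold lf
  rw [Finset.sum_mul, MvPolynomial.coeff_sum]
  refine Finset.sum_congr rfl fun i _ => ?_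
  rw [mul_assoc, MvPolynomial.coeff_C_mul, MvPolynomial.coeff_X_mul']
  by_cases h : b i = 0 <;> simp [h]

theorem dec_coe (b : Fin k →₀ ℕ) (i : Fin k) : dec (⇑b) i = ⇑(b - Finsupp.single i 1 : Fin k →₀ ℕ) := by
  ext l
  by_cases h : l = i
  · subst h; simp [dec_self]
  · rw [dec_ne _ h]; simp [Finsupp.single_apply, Ne.symm h]

theorem dec_dec_coe (b : Fin k →₀ ℕ) (i : Fin k) (h : b i ≠ 0) :
    dec (dec (fun l => 2 * b l) i) i = fun l => 2 * (b - Finsupp.single i 1 : Fin k →₀ ℕ) l := by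
  ext l
  by_cases h : l = i
  · subst h; simp [dec_self]; omega
  · rw [dec_ne _ h, dec_ne _ h]; simp [Finsupp.single_apply, Ne.symm h]

theorem lin_mp_inv {R : Type*} [CommRing R] (u : List Z → R) (f : Z → Z)
    (h : ∀ l, u (l.map f) = u l) (c : Ch R Z) : lin u (mp f c) = lin u c :=
  ch_ext' (f := lin u ∘ₗ mp f) (g := lin u) (fun l => by simp [h]) c

theorem iter_inv (u : List Z → ZMod p) (f : Z → Z)
    (h : ∀ l, u (l.map f) = u l) (j : ℕ) (c : Ch (ZMod p) Z) : lin u (mp (f^[j]) c) = lin u c := by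
  induction j generalizing c with
  | zero => simp; rw [show (id : Z → Z) = fun x => x from rfl, mp_id]
  | succ n ih =>
    rw [← lin_mp_inv u f h c, ← ih (mp f c), mp_mp]; rfl

/-- vanishing on length at least two lists of the empty cup -/
theorem emp_vanish (u : List Z → ZMod p) (hu : ∀ x y l, u (x :: y :: l) = 0) (σ : Fin k → Z → Z)
    (z0 : Z) (a : Fin k → ℕ) (ha : a ≠ 0) : lin u (model p σ z0 a) = 0 := by
  rw [model_eq, bdry, if_neg ha]
  have h1 : ∀ (x y : Z) (c : Ch (ZMod p) Z), lin u (con x (con y c)) = 0 := fun x y c => by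
    have := ch_ext' (f := lin u ∘ₗ con x ∘ₗ con y)
        (g := (0 : Ch (ZMod p) Z →ₗ[ZMod p] ZMod p)) (fun l => by simp [hu]) c
    simpa using this
  have h2 : ∀ (j : ℕ) i b, lin u (con z0 (((mp (σ i) : Module.End _ (Ch (ZMod p) Z)) ^ j)
      (model p σ z0 b))) = 0 := by
    intro j i b
    rw [mp_pow, model_eq, mp_con, h1]
  unfold Rsum
  simp only [map_sum]
  refine Finset.sum_eq_zero fun i _ => ?_
  split_ifs
  · simp
  · rw [map_smul, map_smul]
    unfold D
    split_ifs
    · have e1 := h2 1 i (dec a i)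
      have e0 := h2 0 i (dec a i)
      simp only [pow_one, pow_zero, Module.End.one_apply] at e1 e0
      simp [e1, e0]
    · simp only [LinearMap.sum_apply, map_sum, h2]; simp

theorem step1 (σ : Fin k → Z → Z) (z0 : Z) (t : Z → Z → ZMod 2) (ts : List (Z → Z → ZMod 2))
    (hinv : ∀ s ∈ ts, ∀ i x y, s (σ i x) (σ i y) = s x y)
    (hdeg : t z0 z0 = 0) (a : Fin k → ℕ) :
    lin (cup1 (t :: ts)) (model 2 σ z0 a) = ∑ i, if a i = 0 then 0 else
      t z0 (σ i z0) * lin (cup1 ts) (model 2 σ z0 (dec a i)) := by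
  by_cases h : a = 0
  · subst h
    rw [model_eq]; simp [bdry, cup1]
  rw [model_eq, bdry, if_neg h, Rsum]
  simp only [map_sum]
  refine Finset.sum_congr rfl fun i _ => ?_
  split_ifs with h0
  · simp
  have key : ∀ j : ℕ, lin (cup1 (t :: ts)) (con z0 (((mp (σ i) : Module.End _ (Ch (ZMod 2) Z)) ^ j)
      (model 2 σ z0 (dec a i)))) = t z0 ((σ i)^[j] z0) * lin (cup1 ts) (model 2 σ z0 (dec a i)) := by
    intro j
    rw [← iter_inv (cup1 ts) (σ i) (cup1_mp ts (σ i) (fun s hs => hinv s hs i)) j, mp_pow]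
    rw [model_eq σ z0 (dec a i), mp_con, cup1_cons2]
  have e1 := key 1
  have e0 := key 0
  simp only [pow_one, pow_zero, Module.End.one_apply, Function.iterate_one, Function.iterate_zero,
    id, hdeg, zero_mul] at e1 e0
  rw [map_smul, map_smul]
  have he : eps (ZMod 2) a i = 1 := by
    unfold eps
    rw [show (-1 : ZMod 2) = 1 by decide, one_pow]
  rw [he, one_smul]
  unfold D
  split_ifs
  · simp [e1, e0]
  · simp [Finset.sum_range_succ, e1, e0]

theorem eval1 (σ : Fin k → Z → Z) (z0 : Z) (t : ι → Z → Z → ZMod 2) (χ : ι → Fin k → ZMod 2)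
    (hinv : ∀ s i x y, t s (σ i x) (σ i y) = t s x y)
    (hdeg : ∀ s, t s z0 z0 = 0) (hχ : ∀ s i, t s z0 (σ i z0) = χ s i) (L : List ι)
    (b : Fin k →₀ ℕ) :
    lin (cup1 (L.map t)) (model 2 σ z0 b) =
      MvPolynomial.coeff b (L.map fun s => lf (χ s)).prod := by
  induction L generalizing b with
  | nil =>
    by_cases h : b = 0
    · subst h
      rw [model_eq]; simp [bdry, cup1]
    · have h' : (⇑b) ≠ 0 := by simpa using h
      rw [emp_vanish _ _ _ _ _ h']
      · simp [MvPolynomial.coeff_one, Ne.symm h]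
      · simp [cup1]
  | cons s L ih =>
    rw [List.map_cons, List.map_cons, List.prod_cons, coeff_lf, step1]
    · refine Finset.sum_congr rfl fun i _ => ?_
      rw [dec_coe, ih, hχ]
    · intro s hs i x y
      obtain ⟨s', -, rfl⟩ := List.mem_map.1 hs
      exact hinv _ _ _ _
    · exact hdeg s

theorem sum_antisymm {R : Type*} [CommRing R] (Y : Fin k → Fin k → R)
    (h : ∀ i j, i ≠ j → Y i j + Y j i = 0) : ∑ i, ∑ j, Y i j = ∑ i, Y i i := by
  have : ∑ i, ∑ j, (Y i j - if i = j then Y i i else 0) = 0 := by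
    rw [← Finset.sum_product']
    refine Finset.sum_involution (fun x _ => (x.2, x.1)) ?_ ?_ (by simp) (by simp)
    · rintro ⟨i, j⟩ -
      dsimp only
      by_cases hij : i = j
      · subst hij; simp
      · simp [hij, Ne.symm hij, h i j hij]
    · rintro ⟨i, j⟩ - hne heq
      have hij : i = j := (Prod.ext_iff.1 heq).2
      subst hij
      simp at hne
  simp only [Finset.sum_sub_distrib] at this
  simpa [sub_eq_zero] using this

theorem step2 (σ : Fin k → Z → Z) (z0 : Z) (t : Z → Z → Z → ZMod p)
    (ts : List (Z → Z → Z → ZMod p))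
    (hinv : ∀ s ∈ ts, ∀ i x y z, s (σ i x) (σ i y) (σ i z) = s x y z)
    (hdeg : ∀ x, t z0 x x = 0)
    (hsym : ∀ i i' (j j' : ℕ), t z0 ((σ i)^[j] z0) ((σ i)^[j] ((σ i')^[j'] z0)) =
      t z0 ((σ i')^[j'] z0) ((σ i')^[j'] ((σ i)^[j] z0)))
    (a : Fin k → ℕ) (hev : ∀ i, Even (a i)) :
    lin (cup2 (t :: ts)) (model p σ z0 a) = ∑ i, if a i = 0 then 0 else
      (∑ j ∈ Finset.range p, t z0 ((σ i)^[j] z0) ((σ i)^[j] (σ i z0))) *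
        lin (cup2 ts) (model p σ z0 (dec (dec a i) i)) := by
  set S : Fin k → Module.End (ZMod p) (Ch (ZMod p) Z) := fun i => mp (σ i) with hS
  set F := model p σ z0 with hF
  set g : Ch (ZMod p) Z →ₗ[ZMod p] ZMod p := lin (cup2 ts) with hg
  set f : Ch (ZMod p) Z →ₗ[ZMod p] ZMod p := lin (cup2 (t :: ts)) with hf
  by_cases h : a = 0
  · subst h
    rw [hF, model_eq]; simp [bdry, cup2, hf]
  have hFne : ∀ a : Fin k → ℕ, a ≠ 0 → F a = con z0 (Rsum p S F a) := by
    intro a ha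
    rw [hF, model_eq, bdry, if_neg ha]
  have hpow : ∀ i (j : ℕ) x c, (S i ^ j) (con x c) = con ((σ i)^[j] x) ((S i ^ j) c) := by
    intro i j x c
    rw [hS, mp_pow, mp_pow, mp_con]
  have key : ∀ i (j : ℕ) i' (j' : ℕ) b, f (con z0 (con ((σ i)^[j] z0) ((S i ^ j)
      ((S i' ^ j') (F b))))) = t z0 ((σ i)^[j] z0) ((σ i)^[j] ((σ i')^[j'] z0)) * g (F b) := by
    intro i j i' j' b
    have e1 : g (F b) = g ((S i ^ j) ((S i' ^ j') (F b))) := by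
      rw [hS, mp_pow, mp_pow, hg,
        iter_inv _ _ (cup2_mp ts (σ i) (fun s hs => hinv s hs i)),
        iter_inv _ _ (cup2_mp ts (σ i') (fun s hs => hinv s hs i'))]
    rw [e1, hF, model_eq, hpow, hpow, hf, cup2_cons3]
  set Y : Fin k → Fin k → ZMod p := fun i i' => if a i = 0 ∨ dec a i i' = 0 then 0 else
    eps _ a i * eps _ (dec a i) i' * ∑ j ∈ Finset.range p,
      f (con z0 (con ((σ i)^[j] z0) ((S i ^ j) (D p (S i') (dec a i i')
        (F (dec (dec a i) i')))))) with hY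
  have e1 : f (F a) = ∑ i, ∑ i', Y i i' := by
    rw [hFne a h, Rsum]
    simp only [map_sum]
    refine Finset.sum_congr rfl fun i _ => ?_
    split_ifs with h0
    · simp [hY, h0]
    · have hd : dec a i ≠ 0 := by
        intro h1
        have h2 := congrFun h1 i
        rw [dec_self] at h2
        have := hev i
        obtain ⟨w, hw⟩ := this
        simp at h2; omega
      rw [hFne _ hd]
      have : D p (S i) (a i) = ∑ j ∈ Finset.range p, S i ^ j := by
        rw [D, if_neg (Nat.not_odd_iff_even.2 (hev i))]
      rw [this]
      simp only [LinearMap.sum_apply, map_sum, map_smul, hpow]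
      simp only [hY, h0, false_or]
      unfold Rsum
      simp only [map_sum, smul_eq_mul]
      rw [Finset.sum_comm, Finset.mul_sum]
      refine Finset.sum_congr rfl fun i' _ => ?_
      split_ifs with h3
      · simp
      · simp only [map_smul, smul_eq_mul, ← Finset.mul_sum]
        rw [mul_assoc]
  rw [e1, sum_antisymm]
  · refine Finset.sum_congr rfl fun i _ => ?_
    have h2 := hev i
    obtain ⟨w, hw⟩ := h2
    by_cases h0 : a i = 0
    · simp [hY, h0]
    · have hdn : ¬ (a i = 0 ∨ dec a i i = 0) := by rw [dec_self]; omega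
      have hodd : Odd (dec a i i) := by
        rw [dec_self]; exact ⟨w - 1, by omega⟩
      simp only [hY, if_neg hdn, if_neg h0]
      rw [eps_dec a i i h0]
      simp only [lt_irrefl, if_false, one_mul]
      have hee : eps (ZMod p) a i * eps (ZMod p) a i = 1 := by
        unfold eps; rw [← mul_pow]; simp
      rw [hee, one_mul, Finset.sum_mul]
      refine Finset.sum_congr rfl fun j _ => ?_
      rw [D, if_pos hodd]
      have k1 := key i j i 1 (dec (dec a i) i)
      have k0 := key i j i 0 (dec (dec a i) i)
      simp only [pow_one, pow_zero, Module.End.one_apply, Function.iterate_one,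
        Function.iterate_zero, id, hdeg, zero_mul] at k1 k0
      simp [k1, k0]
  · intro i i' hii
    simp only [hY]
    rw [dec_ne a (Ne.symm hii), dec_ne a hii]
    by_cases h0 : a i = 0 ∨ a i' = 0
    · rw [if_pos h0, if_pos h0.symm, add_zero]
    · rw [if_neg h0, if_neg (fun h' => h0 h'.symm)]
      push Not at h0
      have hD : ∀ i, D p (S i) (a i) = ∑ j ∈ Finset.range p, S i ^ j := fun i => by
        rw [D, if_neg (Nat.not_odd_iff_even.2 (hev i))]
      rw [hD, hD]
      simp only [LinearMap.sum_apply, map_sum, key]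
      rw [Finset.sum_comm (s := Finset.range p), dec_comm a hii, eps_dec a i i' h0.1,
        eps_dec a i' i h0.2]
      simp only [fun j j' => hsym i i' j j']
      rcases lt_or_gt_of_ne hii with h1 | h1
      · rw [if_pos h1, if_neg (not_lt.2 h1.le)]; ring
      · rw [if_pos h1, if_neg (not_lt.2 h1.le)]; ring

theorem eval2 (σ : Fin k → Z → Z) (z0 : Z) (t : ι → Z → Z → Z → ZMod p) (χ : ι → Fin k → ZMod p)
    (hinv : ∀ s i x y z, t s (σ i x) (σ i y) (σ i z) = t s x y z)
    (hdeg : ∀ s x, t s z0 x x = 0)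
    (hsym : ∀ s i i' (j j' : ℕ), t s z0 ((σ i)^[j] z0) ((σ i)^[j] ((σ i')^[j'] z0)) =
      t s z0 ((σ i')^[j'] z0) ((σ i')^[j'] ((σ i)^[j] z0)))
    (hχ : ∀ s i, ∑ j ∈ Finset.range p, t s z0 ((σ i)^[j] z0) ((σ i)^[j] (σ i z0)) = χ s i)
    (L : List ι) (b : Fin k →₀ ℕ) :
    lin (cup2 (L.map t)) (model p σ z0 (fun l => 2 * b l)) =
      MvPolynomial.coeff b (L.map fun s => lf (χ s)).prod := by
  induction L generalizing b with
  | nil =>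
    by_cases h : b = 0
    · subst h
      rw [model_eq]
      simp [bdry, cup2, funext_iff]
    · have h' : (fun l => 2 * b l) ≠ 0 := by
        intro h1
        apply h
        ext l
        have := congrFun h1 l
        simpa using this
      rw [emp_vanish _ _ _ _ _ h']
      · simp [MvPolynomial.coeff_one, Ne.symm h]
      · simp [cup2]
  | cons s L ih =>
    rw [List.map_cons, List.map_cons, List.prod_cons, coeff_lf, step2]
    · refine Finset.sum_congr rfl fun i _ => ?_
      by_cases h0 : b i = 0
      · simp [h0]
      · rw [if_neg (by omega), if_neg h0, dec_dec_coe _ _ h0, ih, hχ]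
    · intro s hs i x y
      obtain ⟨s', -, rfl⟩ := List.mem_map.1 hs
      exact hinv _ _ _ _
    · exact hdeg s
    · exact hsym s
    · intro i; exact even_two_mul _

end Eval

end TT

namespace TT
section Geo
variable {p k m : ℕ}

abbrev Mx (p k m : ℕ) := Fin (m + 1) → (Fin k → ZMod p) → ℝ

/-- shift -/
def shf (h : Fin k → ZMod p) (y : Mx p k m) : Mx p k m := fun v g => y v (g - h)

variable [NeZero p]

def KF (γ : Fin (m + 1) → (Fin k → ZMod p)) : Set (Mx p k m) :=
  {y | (∀ v g, 0 ≤ y v g) ∧ (∑ v, ∑ g, y v g = 1) ∧ ∀ v g, g ≠ γ v → y v g = 0}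

def IsK (y : Mx p k m) : Prop := ∃ γ, y ∈ KF γ

theorem KF_convex (γ : Fin (m + 1) → (Fin k → ZMod p)) : Convex ℝ (KF γ) := by
  rintro x ⟨hx1, hx2, hx3⟩ y ⟨hy1, hy2, hy3⟩ a b ha hb hab
  refine ⟨fun v g => ?_, ?_, fun v g h => ?_⟩
  · simp only [Pi.add_apply, Pi.smul_apply, smul_eq_mul]
    have := hx1 v g
    have := hy1 v g
    positivity
  · simp only [Pi.add_apply, Pi.smul_apply, smul_eq_mul, Finset.sum_add_distrib,
      ← Finset.mul_sum, hx2, hy2]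
    linarith
  · simp [hx3 v g h, hy3 v g h]

theorem shf_KF (h : Fin k → ZMod p) (y : Mx p k m) (γ : Fin (m + 1) → (Fin k → ZMod p))
    (hy : y ∈ KF γ) : shf h y ∈ KF (fun v => γ v + h) := by
  obtain ⟨h1, h2, h3⟩ := hy
  refine ⟨fun v g => h1 _ _, ?_, fun v g hg => h3 _ _ ?_⟩
  · rw [← h2]
    refine Finset.sum_congr rfl fun v _ => ?_
    exact (Equiv.subRight h).sum_comp (fun g => y v g)
  · intro h'; apply hg; show g = γ v + h; rw [← h']; simp

theorem shf_IsK (h : Fin k → ZMod p) (y : Mx p k m) (hy : IsK y) : IsK (shf h y) := by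
  obtain ⟨γ, hγ⟩ := hy
  exact ⟨_, shf_KF h y γ hγ⟩

theorem shf_shf (h h' : Fin k → ZMod p) (y : Mx p k m) : shf h (shf h' y) = shf (h + h') y := by
  ext v g; simp only [shf]; congr 1; abel

theorem shf_zero (y : Mx p k m) : shf 0 y = y := by
  ext v g; simp [shf]

theorem shf_IsK_iff (h : Fin k → ZMod p) (y : Mx p k m) : IsK (shf h y) ↔ IsK y := by
  refine ⟨fun hy => ?_, shf_IsK h y⟩
  have := shf_IsK (-h) _ hy
  rwa [shf_shf, neg_add_cancel, shf_zero] at this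

abbrev K (p k m : ℕ) [NeZero p] := {y : Mx p k m // IsK y}

def sh (i : Fin k) (y : K p k m) : K p k m := ⟨shf (Pi.single i 1) y.1, shf_IsK _ _ y.2⟩

theorem sh_comm (i j : Fin k) (y : K p k m) : sh i (sh j y) = sh j (sh i y) := by
  apply Subtype.ext
  simp only [sh, shf_shf]; rw [add_comm]

theorem sh_iter (i : Fin k) (n : ℕ) (y : K p k m) :
    ((sh i)^[n] y).1 = shf (n • Pi.single i 1) y.1 := by
  induction n generalizing y with
  | zero => simp [shf_zero]
  | succ n ih =>
    rw [Function.iterate_succ_apply, ih, sh, shf_shf, succ_nsmul]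

theorem sh_iter_p (i : Fin k) (y : K p k m) : (sh i)^[p] y = y := by
  apply Subtype.ext
  rw [sh_iter]
  have : p • (Pi.single i 1 : Fin k → ZMod p) = 0 := by
    ext l; simp
  rw [this, shf_zero]

noncomputable def vtx (n : ℕ) : K p k m :=
  ⟨fun v g => if v.val = min n m ∧ g = 0 then 1 else 0, ⟨fun _ => 0, by
    refine ⟨fun v g => by dsimp only; split_ifs <;> norm_num, ?_, fun v g hg => by simp [hg]⟩
    rw [Finset.sum_eq_single (⟨min n m, by omega⟩ : Fin (m + 1))]
    · simp
    · intro v _ hv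
      have : v.val ≠ min n m := fun h => hv (Fin.ext h)
      simp [this]
    · simp⟩⟩

noncomputable def bary (l : List (K p k m)) : Mx p k m :=
  (l.length : ℝ)⁻¹ • (l.map Subtype.val).sum

open Classical in
noncomputable def bc (l : List (K p k m)) : K p k m :=
  if h : IsK (bary l) then ⟨bary l, h⟩ else l.headD (vtx 0)

theorem bary_sh (i : Fin k) (l : List (K p k m)) :
    bary (l.map (sh i)) = shf (Pi.single i 1) (bary l) := by
  have : ((l.map (sh i)).map Subtype.val).sum = shf (Pi.single i 1) (l.map Subtype.val).sum := by
    induction l with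
    | nil => rfl
    | cons x l ih => simp only [List.map_cons, List.sum_cons, ih]; rfl
  unfold bary
  rw [this, List.length_map]
  rfl

theorem bc_sh (i : Fin k) (l : List (K p k m)) (hl : l ≠ []) :
    bc (l.map (sh i)) = sh i (bc l) := by
  unfold bc
  have hiff : IsK (bary (l.map (sh i))) ↔ IsK (bary l) := by rw [bary_sh, shf_IsK_iff]
  by_cases h : IsK (bary l)
  · rw [dif_pos h, dif_pos (hiff.2 h)]
    apply Subtype.ext
    exact bary_sh i l
  · rw [dif_neg h, dif_neg (fun h' => h (hiff.1 h'))]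
    obtain ⟨x, l, rfl⟩ := List.exists_cons_of_ne_nil hl
    rfl

def vals (l : List (K p k m)) : Set (Mx p k m) := {x | ∃ z ∈ l, z.1 = x}

theorem bary_mem (l : List (K p k m)) (hl : l ≠ []) : bary l ∈ convexHull ℝ (vals l) := by
  have hn : (l.length : ℝ) ≠ 0 := by simpa using hl
  have : bary l = ∑ i : Fin l.length, (l.length : ℝ)⁻¹ • (l[i].1 : Mx p k m) := by
    rw [← Finset.smul_sum]
    unfold bary
    rw [← Fin.sum_univ_fun_getElem]
    rfl
  rw [this]
  refine (convex_convexHull ℝ _).sum_mem (fun _ _ => by positivity) ?_ ?_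
  · simp [hn]
  · intro i _
    exact subset_convexHull ℝ _ ⟨l[i], List.getElem_mem _, rfl⟩

theorem bc_val (l : List (K p k m)) (hl : l ≠ []) (γ : Fin (m + 1) → (Fin k → ZMod p))
    (h : ∀ y ∈ l, y.1 ∈ KF γ) : (bc l).1 = bary l := by
  have : bary l ∈ KF γ := by
    refine convexHull_min ?_ (KF_convex γ) (bary_mem l hl)
    rintro x ⟨z, hz, rfl⟩
    exact h z hz
  unfold bc
  rw [dif_pos ⟨γ, this⟩]

theorem list_sum_bound {α : Type*} (l : List α) (f : α → ℝ) (Dd : ℝ) (v : α) (hv : v ∈ l)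
    (h0 : f v = 0) (h : ∀ w ∈ l, f w ≤ Dd) : (l.map f).sum ≤ ((l.length : ℝ) - 1) * Dd := by
  classical
  rw [← List.sum_map_erase f hv, h0, zero_add]
  have hlen : (l.erase v).length = l.length - 1 := List.length_erase_of_mem hv
  have hpos : 0 < l.length := List.length_pos_of_mem hv
  have := List.sum_le_card_nsmul ((l.erase v).map f) Dd (by
    intro x hx
    obtain ⟨w, hw, rfl⟩ := List.mem_map.1 hx
    exact h w (List.mem_of_mem_erase hw))
  rw [List.length_map, hlen, nsmul_eq_mul, Nat.cast_sub hpos] at this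
  simpa using this

theorem dist_bary (l : List (K p k m)) (hlen : l.length ≤ m + 1) (Dd : ℝ) (hD : 0 ≤ Dd)
    (h : ∀ x ∈ l, ∀ y ∈ l, dist x y ≤ Dd) (v : K p k m) (hv : v ∈ l) :
    dist v.1 (bary l) ≤ (m / (m + 1) : ℝ) * Dd := by
  have hpos : 0 < l.length := List.length_pos_of_mem hv
  have hn : (0 : ℝ) < l.length := by exact_mod_cast hpos
  have e : bary l - v.1 = (l.length : ℝ)⁻¹ • (l.map fun w : K p k m => w.1 - v.1).sum := by
    have : ∀ l : List (K p k m), (l.map fun w : K p k m => w.1 - v.1).sum =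
        (l.map Subtype.val).sum - (l.length : ℝ) • v.1 := by
      intro l
      induction l with
      | nil => simp
      | cons x l ih => simp only [List.map_cons, List.sum_cons, ih, List.length_cons,
          Nat.cast_add, Nat.cast_one, add_smul, one_smul]; abel
    rw [this, smul_sub, smul_smul, inv_mul_cancel₀ hn.ne', one_smul]; rfl
  rw [dist_comm, dist_eq_norm, e, norm_smul, Real.norm_of_nonneg (by positivity)]
  have h1 : ‖(l.map fun w : K p k m => w.1 - v.1).sum‖ ≤
      (l.map fun w : K p k m => ‖w.1 - v.1‖).sum := by
    have : ∀ l : List (K p k m), ‖(l.map fun w : K p k m => w.1 - v.1).sum‖ ≤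
      (l.map fun w : K p k m => ‖w.1 - v.1‖).sum := by
      intro l
      induction l with
      | nil => simp
      | cons x l ih =>
        simp only [List.map_cons, List.sum_cons]
        exact (norm_add_le _ _).trans (by linarith)
    exact this l
  have h2 := list_sum_bound l (fun w : K p k m => ‖w.1 - v.1‖) Dd v hv (by simp) (by
    intro w hw
    have := h w hw v hv
    rwa [Subtype.dist_eq, dist_eq_norm] at this)
  have h3 : (l.length : ℝ)⁻¹ * ((l.length - 1) * Dd) ≤ (m / (m + 1) : ℝ) * Dd := by
    rw [← mul_assoc]
    refine mul_le_mul_of_nonneg_right ?_ hD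
    rw [inv_mul_eq_div, div_le_div_iff₀ hn (by positivity)]
    have : (l.length : ℝ) ≤ m + 1 := by exact_mod_cast hlen
    nlinarith
  calc _ ≤ (l.length : ℝ)⁻¹ * ((l.length - 1) * Dd) :=
        mul_le_mul_of_nonneg_left (h1.trans h2) (by positivity)
    _ ≤ _ := h3

variable {R : Type*} [CommRing R]

theorem sd_supp (γ : Fin (m + 1) → (Fin k → ZMod p)) (Dd : ℝ) (hD : 0 ≤ Dd) (n : ℕ) :
    ∀ l : List (K p k m), l.length = n → n ≤ m + 1 → (∀ y ∈ l, y.1 ∈ KF γ) →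
      (∀ x ∈ l, ∀ y ∈ l, dist x y ≤ Dd) →
      sd bc (gen R l) ∈ Sup (R := R) (fun l' => l'.length = n ∧
        (∀ y ∈ l', y.1 ∈ convexHull ℝ (vals l)) ∧
        ∀ x ∈ l', ∀ y ∈ l', dist x y ≤ (m / (m + 1) : ℝ) * Dd) := by
  induction n with
  | zero =>
    intro l hl _ _ _
    rw [List.length_eq_zero_iff] at hl
    subst hl
    rw [sd_nil]
    exact gen_mem (by simp)
  | succ n ih =>
    intro l hl hn hγ hdist
    have hne : l ≠ [] := by rintro rfl; simp at hl
    rw [sd_gen bc l hne]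
    have h1 : sd bc (bdl R l) ∈ Sup (R := R) (fun l' => l'.length = n ∧
        (∀ y ∈ l', y.1 ∈ convexHull ℝ (vals l)) ∧
        ∀ x ∈ l', ∀ y ∈ l', dist x y ≤ (m / (m + 1) : ℝ) * Dd) := by
      refine lin_mem (fun l' hl' => ?_) (bdl_mem l)
      have h2 := ih l' (by omega) (by omega) (fun y hy => hγ y (hl'.2 y hy))
        (fun x hx y hy => hdist x (hl'.2 x hx) y (hl'.2 y hy))
      rw [sd, lin_gen] at h2
      refine Sup_mono ?_ h2
      rintro l'' ⟨a1, a2, a3⟩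
      refine ⟨a1, fun y hy => convexHull_mono ?_ (a2 y hy), a3⟩
      rintro x ⟨z, hz, rfl⟩
      exact ⟨z, hl'.2 z hz, rfl⟩
    refine con_mem _ ?_ h1
    rintro l' ⟨a1, a2, a3⟩
    have hb := bc_val l hne γ hγ
    have hbd : ∀ y ∈ l', dist y (bc l) ≤ (m / (m + 1) : ℝ) * Dd := by
      intro y hy
      rw [Subtype.dist_eq, hb]
      have hsub : convexHull ℝ (vals l) ⊆ Metric.closedBall (bary l) ((m / (m + 1) : ℝ) * Dd) := by
        refine convexHull_min ?_ (convex_closedBall _ _)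
        rintro x ⟨z, hz, rfl⟩
        exact dist_bary l (by omega) Dd hD hdist z hz
      exact hsub (a2 y hy)
    refine ⟨by simp [a1], ?_, ?_⟩
    · intro y hy
      rcases List.mem_cons.1 hy with rfl | hy
      · rw [hb]; exact bary_mem l hne
      · exact a2 y hy
    · intro x hx y hy
      rcases List.mem_cons.1 hx with rfl | hx <;> rcases List.mem_cons.1 hy with rfl | hy
      · rw [dist_self]; positivity
      · rw [dist_comm]; exact hbd y hy
      · exact hbd x hx
      · exact a3 x hx y hy

def Good (Dd : ℝ) (l : List (K p k m)) : Prop :=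
  l.length ≤ m + 1 ∧ (∃ γ, ∀ y ∈ l, y.1 ∈ KF γ) ∧ ∀ x ∈ l, ∀ y ∈ l, dist x y ≤ Dd

theorem sd_good (Dd : ℝ) (hD : 0 ≤ Dd) (c : Ch R (K p k m)) (hc : c ∈ Sup (R := R) (Good Dd)) :
    sd bc c ∈ Sup (R := R) (Good ((m / (m + 1) : ℝ) * Dd)) := by
  refine lin_mem (fun l hl => ?_) hc
  obtain ⟨h1, ⟨γ, h2⟩, h3⟩ := hl
  have h4 := sd_supp (R := R) γ Dd hD l.length l rfl h1 h2 h3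
  rw [sd, lin_gen] at h4
  refine Sup_mono ?_ h4
  rintro l' ⟨a1, a2, a3⟩
  refine ⟨by omega, ⟨γ, fun y hy => ?_⟩, a3⟩
  refine convexHull_min ?_ (KF_convex γ) (a2 y hy)
  rintro x ⟨z, hz, rfl⟩
  exact h2 z hz

theorem sd_iter_good (Dd : ℝ) (hD : 0 ≤ Dd) (c : Ch R (K p k m)) (n : ℕ)
    (hc : c ∈ Sup (R := R) (Good Dd)) :
    ((sd bc : Module.End R (Ch R (K p k m))) ^ n) c ∈
      Sup (R := R) (Good ((m / (m + 1) : ℝ) ^ n * Dd)) := by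
  induction n with
  | zero => simpa using hc
  | succ n ih =>
    rw [pow_succ' (sd bc : Module.End R (Ch R (K p k m))) n, Module.End.mul_apply,
      pow_succ' (m / (m + 1) : ℝ) n, mul_assoc]
    exact sd_good _ (by positivity) _ ih

/-- initial support predicate -/
def Bp (n : ℕ) (l : List (K p k m)) : Prop :=
  l.length = n ∧ (∃ γ, ∀ y ∈ l, y.1 ∈ KF γ) ∧ ∀ y ∈ l, ∀ v : Fin (m + 1), n ≤ v.val → ∀ g, y.1 v g = 0

theorem Bp_sh (n : ℕ) (i : Fin k) (l : List (K p k m)) (h : Bp n l) : Bp n (l.map (sh i)) := by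
  obtain ⟨h1, ⟨γ, h2⟩, h3⟩ := h
  refine ⟨by simpa using h1, ⟨fun v => γ v + Pi.single i 1, ?_⟩, ?_⟩
  · intro y hy
    obtain ⟨z, hz, rfl⟩ := List.mem_map.1 hy
    exact shf_KF _ _ γ (h2 z hz)
  · intro y hy v hv g
    obtain ⟨z, hz, rfl⟩ := List.mem_map.1 hy
    exact h3 z hz v hv _

theorem Bp_cons (n : ℕ) (hn : n ≤ m) (l : List (K p k m)) (h : Bp n l) :
    Bp (n + 1) (vtx n :: l) := by
  obtain ⟨h1, ⟨γ, h2⟩, h3⟩ := h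
  refine ⟨by simp [h1], ⟨Function.update γ ⟨n, by omega⟩ 0, ?_⟩, ?_⟩
  · intro y hy
    have hyK := y.2
    obtain ⟨γ', b1, b2, -⟩ := hyK
    refine ⟨b1, b2, fun v g hg => ?_⟩
    rcases List.mem_cons.1 hy with rfl | hy
    · simp only [vtx, min_eq_left hn]
      rw [if_neg]
      rintro ⟨hv, rfl⟩
      apply hg
      have : v = ⟨n, by omega⟩ := Fin.ext hv
      rw [this]; simp
    · by_cases hv : v = ⟨n, by omega⟩
      · exact h3 y hy v (by rw [hv]) g
      · rw [Function.update_of_ne hv] at hg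
        exact (h2 y hy).2.2 v g hg
  · intro y hy v hv g
    rcases List.mem_cons.1 hy with rfl | hy
    · simp only [vtx, min_eq_left hn]
      rw [if_neg]
      rintro ⟨h, -⟩; omega
    · exact h3 y hy v (by omega) g

noncomputable def fam0 (p k m : ℕ) [NeZero p] (a : Fin k → ℕ) : Ch (ZMod p) (K p k m) :=
  fam p (fun i => mp (sh i)) (gen (ZMod p) []) (fun n => con (vtx n)) a

theorem fam0_mem (n : ℕ) (hn : n ≤ m) : ∀ a : Fin k → ℕ, ∑ i, a i = n →
    fam0 p k m a ∈ Sup (R := ZMod p) (Bp (n + 1)) := by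
  induction n with
  | zero =>
    intro a ha
    have ha' := (sum_eq_zero_iff' a).1 ha
    subst ha'
    unfold fam0
    rw [fam_eq, bdry, if_pos rfl]
    simp only [Pi.zero_apply, Finset.sum_const_zero, con_gen]
    exact gen_mem (Bp_cons 0 (by omega) [] ⟨rfl, ⟨0, by simp⟩, by simp⟩)
  | succ n ih =>
    intro a ha
    have ha' : a ≠ 0 := by rintro rfl; simp at ha
    unfold fam0
    rw [fam_eq, bdry, if_neg ha', ha]
    refine con_mem _ (Bp_cons (n + 1) hn) ?_
    unfold Rsum
    refine Submodule.sum_mem _ fun i _ => ?_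
    split_ifs with h0
    · exact Submodule.zero_mem _
    · refine Submodule.smul_mem _ _ ?_
      have hd := ih (by omega) (dec a i) (by
        have := sum_dec a i h0 Finset.univ (Finset.mem_univ _)
        omega)
      have hpow : ∀ j : ℕ, ((mp (sh i) : Module.End (ZMod p) (Ch (ZMod p) (K p k m))) ^ j)
          (fam0 p k m (dec a i)) ∈ Sup (R := ZMod p) (Bp (n + 1)) := by
        intro j
        induction j with
        | zero => simpa using hd
        | succ j ihj =>
          rw [pow_succ', Module.End.mul_apply]
          exact mp_mem _ (Bp_sh _ i) ihj
      unfold D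
      split_ifs
      · have := hpow 1
        rw [pow_one] at this
        exact Submodule.sub_mem _ this hd
      · rw [LinearMap.sum_apply]
        exact Submodule.sum_mem _ fun j _ => hpow j

theorem K_dist_le (x y : K p k m) : dist x y ≤ 1 := by
  have hb : ∀ (x : K p k m) v g, 0 ≤ x.1 v g ∧ x.1 v g ≤ 1 := by
    intro x v g
    obtain ⟨γ, h1, h2, -⟩ := x.2
    refine ⟨h1 v g, ?_⟩
    rw [← h2]
    calc x.1 v g ≤ ∑ g, x.1 v g :=
          Finset.single_le_sum (f := fun g => x.1 v g) (fun g _ => h1 v g) (Finset.mem_univ g)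
      _ ≤ _ := Finset.single_le_sum (f := fun v => ∑ g, x.1 v g)
          (fun v _ => Finset.sum_nonneg fun g _ => h1 v g) (Finset.mem_univ v)
  rw [Subtype.dist_eq, dist_pi_le_iff zero_le_one]
  intro v
  rw [dist_pi_le_iff zero_le_one]
  intro g
  rw [Real.dist_eq, abs_le]
  have := hb x v g
  have := hb y v g
  constructor <;> linarith

theorem IsFam_map {R : Type*} [CommRing R] {C C' : Type*} [AddCommGroup C] [Module R C]
    [AddCommGroup C'] [Module R C'] (p : ℕ) (S : Fin k → Module.End R C)
    (S' : Fin k → Module.End R C') (b : Module.End R C) (b' : Module.End R C') (o : C) (o' : C')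
    (f : C →ₗ[R] C') (hf : ∀ i x, f (S i x) = S' i (f x)) (hb : ∀ x, b' (f x) = f (b x))
    (ho : f o = o') (c : (Fin k → ℕ) → C) (h : IsFam p S b o c) :
    IsFam p S' b' o' (fun a => f (c a)) := by
  intro a
  rw [hb, h a]
  unfold bdry
  split_ifs
  · exact ho
  · exact Rsum_map p S S' f hf c a

theorem mp_pow_one {Z : Type*} (f : Z → Z) (hf : ∀ x, f^[p] x = x) :
    (mp f : Module.End (ZMod p) (Ch (ZMod p) Z)) ^ p = 1 := by
  refine LinearMap.ext fun c => ?_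
  rw [mp_pow]
  have : f^[p] = fun x => x := funext hf
  rw [this, mp_id]; rfl

theorem mp_commute {Z : Type*} (f g : Z → Z) (h : ∀ x, f (g x) = g (f x)) :
    Commute (mp f : Module.End (ZMod p) (Ch (ZMod p) Z)) (mp g) := by
  refine LinearMap.ext fun c => ?_
  rw [Module.End.mul_apply, Module.End.mul_apply, mp_mp, mp_mp]
  congr 2
  exact funext h

theorem famBase {Z : Type*} (σ : Fin k → Z → Z) (hσp : ∀ i x, (σ i)^[p] x = x)
    (hσc : ∀ i j x, σ i (σ j x) = σ j (σ i x)) (q : ℕ → Z) :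
    IsFam p (fun i => (mp (σ i) : Module.End (ZMod p) (Ch (ZMod p) Z))) bd (gen (ZMod p) [])
      (fam p (fun i => (mp (σ i) : Module.End (ZMod p) (Ch (ZMod p) Z))) (gen (ZMod p) [])
        (fun n => con (q n))) :=
  fam_isFam p (fun i => (mp (σ i) : Module.End (ZMod p) (Ch (ZMod p) Z)))
    (fun i => mp_pow_one (σ i) (hσp i))
    (fun i j => mp_commute (σ i) (σ j) (hσc i j)) (gen (ZMod p) []) (fun i => mp_gen (σ i) [])
    bd (fun i x => bd_mp (σ i) x) (bd_gen []) (fun n => con (q n)) (fun n x => bd_con (q n) x)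

theorem lin_mp_inv' {Z : Type*} (u : List Z → ZMod p) (f : Z → Z) (h : ∀ l, u (l.map f) = u l)
    (x : Ch (ZMod p) Z) : lin u (mp f x) = lin u x :=
  ch_ext' (f := lin u ∘ₗ mp f) (g := lin u) (fun l => by simp [h]) x

theorem lin_bd_zero {Z : Type*} (u : List Z → ZMod p) (h : ∀ l, lin u (bdl (ZMod p) l) = 0)
    (x : Ch (ZMod p) Z) : lin u (bd x) = 0 :=
  ch_ext' (f := lin u ∘ₗ bd) (g := 0) (fun l => by simp [h]) x

theorem cmpBase {Z : Type*} (σ : Fin k → Z → Z) (hσp : ∀ i x, (σ i)^[p] x = x)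
    (hσc : ∀ i j x, σ i (σ j x) = σ j (σ i x)) (z0 : Z)
    (u : List Z → ZMod p) (hub : ∀ l, lin u (bdl (ZMod p) l) = 0)
    (huσ : ∀ i l, u (l.map (σ i)) = u l) (c c' : (Fin k → ℕ) → Ch (ZMod p) Z)
    (h : IsFam p (fun i => (mp (σ i) : Module.End (ZMod p) (Ch (ZMod p) Z))) bd (gen (ZMod p) []) c)
    (h' : IsFam p (fun i => (mp (σ i) : Module.End (ZMod p) (Ch (ZMod p) Z))) bd (gen (ZMod p) []) c')
    (a : Fin k → ℕ) : lin u (c a) = lin u (c' a) :=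
  compare p (fun i => (mp (σ i) : Module.End (ZMod p) (Ch (ZMod p) Z)))
    (fun i => mp_pow_one (σ i) (hσp i))
    (fun i j => mp_commute (σ i) (σ j) (hσc i j)) (gen (ZMod p) []) bd (fun i x => bd_mp (σ i) x)
    (con z0) (bd_con z0) c c' h h' (lin u) (CharP.cast_eq_zero _ _) (lin_bd_zero u hub)
    (fun i x => lin_mp_inv' u (σ i) (huσ i) x) a

theorem sdFam (n : ℕ) : IsFam p (fun i => (mp (sh i) : Module.End (ZMod p) (Ch (ZMod p) (K p k m))))
    bd (gen (ZMod p) [])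
    (fun a => ((sd bc : Module.End (ZMod p) (Ch (ZMod p) (K p k m))) ^ n) (fam0 p k m a)) := by
  induction n with
  | zero => 
    have := famBase (p := p) (fun i : Fin k => sh (m := m) i) sh_iter_p sh_comm vtx
    exact this
  | succ n ih =>
    have := IsFam_map p _ (fun i => (mp (sh i) : Module.End (ZMod p) (Ch (ZMod p) (K p k m))))
      bd bd _ (gen (ZMod p) []) (sd bc) (fun i x => sd_mp bc (sh i) (bc_sh i) x)
        (fun x => bd_sd bc x) (sd_nil bc) _ ih
    simp only [pow_succ', Module.End.mul_apply]
    exact this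

/-- main combinatorial-topological lemma -/
theorem topo {Z : Type*} (σ : Fin k → Z → Z) (hσp : ∀ i x, (σ i)^[p] x = x)
    (hσc : ∀ i j x, σ i (σ j x) = σ j (σ i x)) (z0 : Z)
    (Λ : K p k m → Z) (hΛ : ∀ i y, Λ (sh i y) = σ i (Λ y))
    (u : List Z → ZMod p) (hub : ∀ l, lin u (bdl (ZMod p) l) = 0)
    (huσ : ∀ i l, u (l.map (σ i)) = u l)
    (a : Fin k → ℕ) (ha : ∑ i, a i ≤ m) (hne : lin u (model p σ z0 a) ≠ 0)
    (δ : ℝ) (hδ : 0 < δ) :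
    ∃ l : List (K p k m), (∀ x ∈ l, ∀ y ∈ l, dist x y ≤ δ) ∧ u (l.map Λ) ≠ 0 := by
  have hθ : (m / (m + 1) : ℝ) < 1 := by
    rw [div_lt_one (by positivity)]; linarith
  obtain ⟨n, hn⟩ := exists_pow_lt_of_lt_one hδ hθ
  have hF2 := IsFam_map p (fun i => (mp (sh i) : Module.End (ZMod p) (Ch (ZMod p) (K p k m))))
    (fun i => (mp (σ i) : Module.End (ZMod p) (Ch (ZMod p) Z))) bd bd (gen (ZMod p) [])
    (gen (ZMod p) []) (mp Λ)
    (fun i x => by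
      rw [mp_mp, mp_mp]; congr 2; exact funext (hΛ i)) (fun x => bd_mp _ x) (mp_gen _ _) _ (sdFam n)
  have hM := famBase (p := p) σ hσp hσc (fun _ => z0)
  have hcmp := cmpBase σ hσp hσc z0 u hub huσ _ _ hF2 hM a
  change _ = lin u (model p σ z0 a) at hcmp
  rw [← hcmp] at hne
  have h1 : fam0 p k m a ∈ Sup (R := ZMod p) (Good 1) := by
    refine Sup_mono ?_ (fam0_mem _ ha a rfl)
    rintro l ⟨b1, b2, -⟩
    exact ⟨by omega, b2, fun x _ y _ => K_dist_le x y⟩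
  have h2 := sd_iter_good 1 zero_le_one _ n h1
  have h3 := mp_mem (P' := fun l' => ∃ l : List (K p k m), Good ((m / (m + 1) : ℝ) ^ n * 1) l ∧
    l' = l.map Λ) Λ (fun l hl => ⟨l, hl, rfl⟩) h2
  obtain ⟨l', ⟨l, hl, rfl⟩, hl2⟩ := exists_of_ne h3 hne
  refine ⟨l, fun x hx y hy => (hl.2.2 x hx y hy).trans ?_, hl2⟩
  rw [mul_one]; exact hn.le

end Geo

end TT

namespace TT
theorem z2two : ∀ x : ZMod 2, x + x = 0 := by decide
theorem z2val : ∀ x : ZMod 2, x = 0 ∨ x = 1 := by decide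

section Lab
variable {p k m : ℕ}

theorem exists_coeff [Fact p.Prime] {ι : Type*} (L : List ι) (χ : ι → Fin k → ZMod p)
    (hχ : ∀ s, χ s ≠ 0) : ∃ b : Fin k →₀ ℕ, ∑ i, b i = L.length ∧
      MvPolynomial.coeff b (L.map fun s => lf (χ s)).prod ≠ 0 := by
  have hne : (L.map fun s => lf (χ s)).prod ≠ 0 := by
    refine List.prod_ne_zero ?_
    intro h
    obtain ⟨s, -, hs⟩ := List.mem_map.1 h
    apply hχ s
    ext i
    have := congrArg (MvPolynomial.eval (Pi.single i 1)) hs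
    simpa [lf, Pi.single_apply] using this
  have hhom : (L.map fun s => lf (χ s)).prod.IsHomogeneous L.length := by
    clear hne
    induction L with
    | nil => simpa using MvPolynomial.isHomogeneous_one _ _
    | cons s L ih =>
      simp only [List.map_cons, List.prod_cons, List.length_cons]
      rw [add_comm]
      refine MvPolynomial.IsHomogeneous.mul ?_ ih
      unfold lf
      refine MvPolynomial.IsHomogeneous.sum _ _ _ fun i _ => ?_
      have := (MvPolynomial.isHomogeneous_C (Fin k) (χ s i)).mul (MvPolynomial.isHomogeneous_X (ZMod p) i)
      rwa [zero_add] at this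
  obtain ⟨b, hb⟩ := MvPolynomial.ne_zero_iff.1 hne
  refine ⟨b, ?_, hb⟩
  have := hhom hb
  rw [← this, Finsupp.weight_apply, Finsupp.sum_fintype] <;> simp

variable [NeZero p]

/-- first nonzero row -/
def IsFst (y : Mx p k m) (g : Fin k → ZMod p) : Prop :=
  ∃ v, y v g ≠ 0 ∧ ∀ w < v, ∀ g', y w g' = 0

theorem exists_isFst (y : K p k m) : ∃ g, IsFst y.1 g := by
  by_contra hcon
  have : ∀ n : ℕ, ∀ v : Fin (m + 1), v.val = n → ∀ g, y.1 v g = 0 := by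
    intro n
    induction n using Nat.strong_induction_on with
    | _ n ih =>
      intro v hv g
      by_contra h
      exact hcon ⟨g, v, h, fun w hw g' => ih w.val (by omega) w rfl g'⟩
  obtain ⟨γ, -, h2, -⟩ := y.2
  rw [Finset.sum_eq_zero] at h2
  · norm_num at h2
  · intro v _
    exact Finset.sum_eq_zero fun g _ => this _ v rfl g

theorem isFst_unique (y : K p k m) (g g' : Fin k → ZMod p) (h : IsFst y.1 g) (h' : IsFst y.1 g') :
    g = g' := by
  obtain ⟨v, h1, h2⟩ := h
  obtain ⟨v', h1', h2'⟩ := h'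
  obtain ⟨γ, -, -, h3⟩ := y.2
  have hvv : v = v' := by
    rcases lt_trichotomy v v' with h | h | h
    · exact absurd (h2' v h g) h1
    · exact h
    · exact absurd (h2 v' h g') h1'
  subst hvv
  have e1 : g = γ v := by by_contra h; exact h1 (h3 v g h)
  have e2 : g' = γ v := by by_contra h; exact h1' (h3 v g' h)
  rw [e1, e2]

noncomputable def fst (y : K p k m) : Fin k → ZMod p := (exists_isFst y).choose

theorem fst_sh (i : Fin k) (y : K p k m) : fst (sh i y) = fst y + Pi.single i 1 := by
  apply isFst_unique (sh i y) _ _ (exists_isFst (sh i y)).choose_spec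
  obtain ⟨v, h1, h2⟩ := (exists_isFst y).choose_spec
  refine ⟨v, ?_, fun w hw g' => h2 w hw _⟩
  change y.1 v (fst y + Pi.single i 1 - Pi.single i 1) ≠ 0
  rw [add_sub_cancel_right]
  exact h1

theorem K_compact : CompactSpace (K p k m) := by
  have hc : IsCompact (⋃ γ : Fin (m + 1) → (Fin k → ZMod p), KF (m := m) γ) := by
    refine isCompact_iUnion fun γ => ?_
    refine Metric.isCompact_of_isClosed_isBounded ?_ ?_
    · have : KF (m := m) γ = (⋂ v, ⋂ g, {y : Mx p k m | 0 ≤ y v g}) ∩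
          ({y : Mx p k m | ∑ v, ∑ g, y v g = 1} ∩
            ⋂ v, ⋂ g, ⋂ (_ : g ≠ γ v), {y : Mx p k m | y v g = 0}) := by
        ext y; simp [KF]
      rw [this]
      refine IsClosed.inter ?_ (IsClosed.inter ?_ ?_)
      · exact isClosed_iInter fun v => isClosed_iInter fun g =>
          isClosed_le continuous_const (by fun_prop)
      · exact isClosed_eq (by fun_prop) continuous_const
      · exact isClosed_iInter fun v => isClosed_iInter fun g => isClosed_iInter fun _ =>
          isClosed_eq (by fun_prop) continuous_const
    · refine Metric.isBounded_iff.2 ⟨1, fun x hx y hy => ?_⟩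
      exact K_dist_le (⟨x, γ, hx⟩ : K p k m) ⟨y, γ, hy⟩
  have : {y : Mx p k m | IsK y} = ⋃ γ, KF γ := by ext y; simp [IsK]
  rw [← this] at hc
  exact isCompact_iff_compactSpace.1 hc

theorem unif {ι : Type*} [Fintype ι] (H : ι → K p k m → ℂ) (hH : ∀ s, Continuous (H s))
    (hno : ∀ y, ∃ s, H s y ≠ 0) :
    ∃ c > 0, ∃ δ > 0, (∀ y, ∃ s, c ≤ ‖H s y‖) ∧
      ∀ x y, dist x y ≤ δ → ∀ s, ‖H s x - H s y‖ < c / 4 := by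
  have : CompactSpace (K p k m) := K_compact
  have : Nonempty (K p k m) := ⟨vtx 0⟩
  have hcont : Continuous fun y => (fun s => H s y : ι → ℂ) := continuous_pi hH
  obtain ⟨y0, -, hy0⟩ := isCompact_univ.exists_isMinOn Set.univ_nonempty hcont.norm.continuousOn
  have hc : 0 < ‖(fun s => H s y0 : ι → ℂ)‖ := by
    rw [norm_pos_iff]
    obtain ⟨s, hs⟩ := hno y0
    intro h
    exact hs (congrFun h s)
  obtain ⟨δ, hδ, hu⟩ := Metric.uniformContinuous_iff.1
    (CompactSpace.uniformContinuous_of_continuous hcont) _ (by positivity :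
      0 < ‖(fun s => H s y0 : ι → ℂ)‖ / 4)
  refine ⟨_, hc, δ / 2, by positivity, fun y => ?_, fun x y hxy s => ?_⟩
  · by_contra! hcon
    have h1 := (pi_norm_lt_iff (x := fun s => H s y) hc).2 hcon
    have h2 : ‖(fun s => H s y0 : ι → ℂ)‖ ≤ ‖(fun s => H s y : ι → ℂ)‖ := hy0 (Set.mem_univ y)
    linarith
  · have := hu (lt_of_le_of_lt hxy (by linarith))
    rw [dist_eq_norm] at this
    exact lt_of_le_of_lt (norm_le_pi_norm ((fun s => H s x : ι → ℂ) - fun s => H s y) s) this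

theorem core2 {ι : Type*} [Fintype ι] (χ : ι → Fin k → ZMod 2) (hχ : ∀ s, χ s ≠ 0)
    (H : ι → K 2 k m → ℂ) (hH : ∀ s, Continuous (H s)) (him : ∀ s y, (H s y).im = 0)
    (heq : ∀ s i y, H s (sh i y) = ZMod.stdAddChar (χ s i) * H s y)
    (hcard : Fintype.card ι ≤ m) : ∃ y, ∀ s, H s y = 0 := by
  classical
  have : Fact (Nat.Prime 2) := ⟨Nat.prime_two⟩
  by_contra! hno
  obtain ⟨c, hc, δ, hδ, hc1, hc2⟩ := unif H hH hno
  obtain ⟨b, hb, hb2⟩ := exists_coeff (Finset.univ : Finset ι).toList χ hχ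
  rw [Finset.length_toList, Finset.card_univ] at hb
  let σ : Fin k → (ι → ZMod 2) → (ι → ZMod 2) := fun i z s => z s + χ s i
  let Λ : K 2 k m → (ι → ZMod 2) := fun y s => if H s y = 0 then χ s ⬝ᵥ fst y else
    if 0 < (H s y).re then 0 else 1
  let t : ι → (ι → ZMod 2) → (ι → ZMod 2) → ZMod 2 := fun s x y => y s - x s
  have hev := eval1 σ 0 t χ (fun s i x y => by simp [t, σ]) (fun s => by simp [t])
    (fun s i => by simp [t, σ]) (Finset.univ : Finset ι).toList b
  have htwo := z2two
  have hval := z2val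
  have hm1 : (ZMod.stdAddChar (1 : ZMod 2) : ℂ) = -1 := by
    have := ZMod.stdAddChar_coe (N := 2) 1
    rw [Int.cast_one] at this
    rw [this]
    rw [← Complex.exp_pi_mul_I]
    congr 1
    push_cast; ring
  have hre : ∀ s y, H s y ≠ 0 → (H s y).re ≠ 0 := fun s y h h' => h (Complex.ext h' (him s y))
  obtain ⟨l, hl1, hl2⟩ := topo (p := 2) σ (fun i x => by
      ext s; simp only [Function.iterate_succ, Function.iterate_zero, Function.comp, σ, id]
      rw [add_assoc, htwo, add_zero])
    (fun i j x => by ext s; simp only [σ]; ring) 0 Λ (fun i y => by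
      ext s
      simp only [Λ, σ, heq, fst_sh]
      rcases hval (χ s i) with h | h
      · rw [h]
        simp [dotProduct_add, h]
      · rw [h, hm1]
        by_cases h0 : H s y = 0
        · simp [h0, dotProduct_add, h]
        · have := hre s y h0
          simp only [neg_mul, one_mul, neg_eq_zero, h0, if_false, Complex.neg_re]
          rcases lt_or_gt_of_ne this with h1 | h1
          · rw [if_pos (by linarith), if_neg (by linarith), htwo]
          · rw [if_neg (by linarith), if_pos (by linarith), zero_add])
    (cup1 ((Finset.univ : Finset ι).toList.map t))
    (cup1_bd _ (by simp [t]))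
    (fun i l => cup1_mp _ _ (by simp [t, σ]) l) b (by omega) (by rw [hev]; exact hb2) δ hδ
  have hne := cup1_ne _ _ hl2
  have hne' : ∀ s, ∃ x ∈ l, ∃ y ∈ l, t s (Λ x) (Λ y) ≠ 0 := by
    intro s
    have := hne (t s) (by simp)
    simpa using this
  obtain ⟨s0, -⟩ := hno (vtx 0)
  obtain ⟨y, hy, -⟩ := hne' s0
  obtain ⟨s, hs⟩ := hc1 y
  obtain ⟨x1, hx1, x2, hx2, hx⟩ := hne' s
  have habs : ∀ x, ‖H s x‖ = |(H s x).re| := by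
    intro x
    conv_lhs => rw [show H s x = ((H s x).re : ℂ) from Complex.ext rfl (by simp [him])]
    rw [Complex.norm_real, Real.norm_eq_abs]
  have key : ∀ x ∈ l, Λ x s = if 0 < (H s y).re then 0 else 1 := by
    intro x hxl
    have h1 := hc2 x y (hl1 x hxl y hy) s
    have h2 := (Complex.abs_re_le_norm _).trans_lt h1
    rw [Complex.sub_re, abs_lt] at h2
    rw [habs] at hs
    have h3 : H s x ≠ 0 := by
      intro h0
      rw [h0, Complex.zero_re] at h2
      rcases le_abs.1 hs with h | h <;> linarith
    simp only [Λ, if_neg h3]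
    rcases le_abs.1 hs with h | h
    · rw [if_pos (by linarith), if_pos (by linarith)]
    · rw [if_neg (by linarith), if_neg (by linarith)]
  apply hx
  simp only [t]
  rw [key x1 hx1, key x2 hx2, sub_self]

end Lab

end TT

namespace TT
section Odd
open Complex

theorem exists_bint (u w : ℂˣ) : ∃ n : ℤ, (u : ℂ).arg + (w : ℂ).arg - ((u * w : ℂˣ) : ℂ).arg =
    2 * Real.pi * n := by
  have h := Complex.arg_mul_coe_angle u.ne_zero w.ne_zero
  rw [← Units.val_mul, ← Real.Angle.coe_add] at h
  exact Real.Angle.angle_eq_iff_two_pi_dvd_sub.1 h.symm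

noncomputable def bint (u w : ℂˣ) : ℤ := (exists_bint u w).choose

theorem bint_spec (u w : ℂˣ) : (u : ℂ).arg + (w : ℂ).arg - ((u * w : ℂˣ) : ℂ).arg =
    2 * Real.pi * bint u w := (exists_bint u w).choose_spec

theorem bint_eq {n : ℤ} {x : ℝ} (h : x = 2 * Real.pi * n) {n' : ℤ} (h' : x = 2 * Real.pi * n') :
    n = n' := by
  rw [h] at h'
  have : (n : ℝ) = n' := mul_left_cancel₀ (by positivity) h'
  exact_mod_cast this

theorem bint_comm (u w : ℂˣ) : bint u w = bint w u := by
  refine bint_eq (bint_spec u w) ?_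
  rw [← bint_spec w u, mul_comm]; ring

theorem bint_one (u : ℂˣ) : bint u 1 = 0 := by
  refine bint_eq (bint_spec u 1) ?_
  simp

theorem bint_cocycle (u v w : ℂˣ) :
    bint v w - bint (u * v) w + bint u (v * w) - bint u v = 0 := by
  refine bint_eq (x := 0) ?_ (by simp)
  push_cast
  have h1 := bint_spec v w
  have h2 := bint_spec (u * v) w
  have h3 := bint_spec u (v * w)
  have h4 := bint_spec u v
  rw [mul_assoc] at h2
  linear_combination h1 - h2 + h3 - h4

theorem bint_small (u w : ℂˣ) (hu : 0 < (u : ℂ).re) (hw : 0 < (w : ℂ).re) : bint u w = 0 := by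
  refine bint_eq (bint_spec u w) ?_
  have h1 := (Complex.abs_arg_lt_pi_div_two_iff (z := u)).2 (Or.inl hu)
  have h2 := (Complex.abs_arg_lt_pi_div_two_iff (z := w)).2 (Or.inl hw)
  rw [abs_lt] at h1 h2
  rw [Units.val_mul, Complex.arg_mul u.ne_zero w.ne_zero ⟨by linarith, by linarith⟩]
  simp

variable {p k m : ℕ}

noncomputable def zt [NeZero p] (a : ZMod p) : ℂˣ := Units.mk0 (ZMod.stdAddChar a) (by
  rw [ZMod.stdAddChar_apply]; exact Circle.coe_ne_zero _)

theorem zt_add [NeZero p] (a b : ZMod p) : zt (a + b) = zt a * zt b := by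
  ext; simp [zt, AddChar.map_add_eq_mul]

theorem zt_pow [NeZero p] (a : ZMod p) : zt a ^ p = 1 := by
  ext; simp only [zt, Units.val_pow_eq_pow_val, Units.val_mk0, Units.val_one]
  rw [← AddChar.map_nsmul_eq_pow]; simp

theorem bint_sum [NeZero p] (a : ZMod p) :
    ((∑ j ∈ Finset.range p, bint (zt a ^ j) (zt a) : ℤ) : ZMod p) = a := by
  have h1 : ∀ n : ℕ, 2 * Real.pi * ((∑ j ∈ Finset.range n, bint (zt a ^ j) (zt a) : ℤ) : ℝ) =
      n * (zt a : ℂ).arg - ((zt a ^ n : ℂˣ) : ℂ).arg := by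
    intro n
    induction n with
    | zero => simp
    | succ n ih =>
      rw [Finset.sum_range_succ]
      push_cast at ih ⊢
      rw [mul_add, ih]
      have := bint_spec (zt a ^ n) (zt a)
      rw [← pow_succ] at this
      push_cast at this
      linear_combination -this
  have h2 := h1 p
  rw [zt_pow] at h2
  simp only [Units.val_one, Complex.arg_one, sub_zero] at h2
  have hz : (zt a : ℂ) = Complex.exp ((2 * Real.pi * (a.val : ℝ) / p : ℝ) * I) := by
    have := ZMod.stdAddChar_coe (N := p) (a.val : ℤ)
    rw [Int.cast_natCast, ZMod.natCast_zmod_val, Int.cast_natCast] at this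
    simp only [zt, Units.val_mk0]
    rw [this]
    congr 1
    push_cast
    ring
  have h3 : (((zt a : ℂ).arg : ℝ) : Real.Angle) = ((2 * Real.pi * (a.val : ℝ) / p : ℝ) : Real.Angle) := by
    rw [hz, Complex.exp_mul_I, ← Complex.ofReal_cos, ← Complex.ofReal_sin, ← Real.Angle.cos_coe,
      ← Real.Angle.sin_coe, Complex.arg_cos_add_sin_mul_I_coe_angle]
  obtain ⟨n, hn⟩ := Real.Angle.angle_eq_iff_two_pi_dvd_sub.1 h3
  have hp0 : (p : ℝ) ≠ 0 := by exact_mod_cast NeZero.ne p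
  have h4 : (∑ j ∈ Finset.range p, bint (zt a ^ j) (zt a) : ℤ) = (a.val : ℤ) + p * n := by
    refine bint_eq h2.symm ?_
    have : (zt a : ℂ).arg = 2 * Real.pi * (a.val : ℝ) / p + 2 * Real.pi * n := by linarith
    rw [this]; push_cast; field_simp
  rw [h4]
  simp

theorem re_div_pos (x y : ℂ) (h : ‖y - x‖ < ‖x‖) : 0 < (y / x).re := by
  have hx : x ≠ 0 := by rintro rfl; simp at h; linarith [norm_nonneg y]
  have h1 : ‖y / x - 1‖ < 1 := by
    rw [div_sub_one hx, norm_div, div_lt_one (norm_pos_iff.2 hx)]; exact h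
  have h2 := (Complex.abs_re_le_norm _).trans_lt h1
  rw [abs_lt, Complex.sub_re, Complex.one_re] at h2
  linarith

theorem coreOdd [Fact p.Prime] {ι : Type*} [Fintype ι] (χ : ι → Fin k → ZMod p) (hχ : ∀ s, χ s ≠ 0)
    (H : ι → K p k m → ℂ) (hH : ∀ s, Continuous (H s))
    (heq : ∀ s i y, H s (sh i y) = ZMod.stdAddChar (χ s i) * H s y)
    (hcard : 2 * Fintype.card ι ≤ m) : ∃ y, ∀ s, H s y = 0 := by
  classical
  by_contra! hno
  obtain ⟨c, hc, δ, hδ, hc1, hc2⟩ := unif H hH hno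
  obtain ⟨b, hb, hb2⟩ := exists_coeff (Finset.univ : Finset ι).toList χ hχ
  rw [Finset.length_toList, Finset.card_univ] at hb
  let σ : Fin k → (ι → ℂˣ) → (ι → ℂˣ) := fun i z s => zt (χ s i) * z s
  let Λ : K p k m → (ι → ℂˣ) := fun y s => if h : H s y = 0 then zt (χ s ⬝ᵥ fst y) else
    Units.mk0 (H s y) h
  let t : ι → (ι → ℂˣ) → (ι → ℂˣ) → (ι → ℂˣ) → ZMod p := fun s x y z =>
    ((bint (y s / x s) (z s / y s) : ℤ) : ZMod p)
  have hit : ∀ i j x s, ((σ i)^[j] x) s = zt (χ s i) ^ j * x s := by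
    intro i j x s
    induction j with
    | zero => simp
    | succ j ih => rw [Function.iterate_succ_apply']; simp only [σ]; rw [ih, pow_succ', mul_assoc]
  have htinv : ∀ s i x y z, t s (σ i x) (σ i y) (σ i z) = t s x y z := by
    intro s i x y z
    simp only [t, σ, mul_div_mul_left_eq_div]
  have htc : ∀ s x y z w, t s y z w - t s x z w + t s x y w - t s x y z = 0 := by
    intro s x y z w
    have := bint_cocycle (y s / x s) (z s / y s) (w s / z s)
    have e1 : (y s / x s) * (z s / y s) = z s / x s := by rw [mul_comm]; exact div_mul_div_cancel _ _ _
    have e2 : (z s / y s) * (w s / z s) = w s / y s := by rw [mul_comm]; exact div_mul_div_cancel _ _ _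
    rw [e1, e2] at this
    simp only [t]
    exact_mod_cast congrArg (Int.cast : ℤ → ZMod p) this
  have hev := eval2 σ 1 t χ htinv (fun s x => by simp [t, bint_one])
    (fun s i i' j j' => by
      simp only [t, hit, Pi.one_apply, mul_one, div_one, mul_div_cancel_left]
      rw [bint_comm])
    (fun s i => by
      rw [← bint_sum (χ s i)]
      push_cast
      refine Finset.sum_congr rfl fun j _ => ?_
      simp only [t, hit, Pi.one_apply, mul_one, div_one, mul_div_cancel_left]
      simp [σ]) (Finset.univ : Finset ι).toList b
  obtain ⟨l, hl1, hl2⟩ := topo (p := p) σ (fun i x => by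
      ext1 s; rw [hit, zt_pow, one_mul])
    (fun i j x => by ext1 s; simp only [σ]; exact mul_left_comm _ _ _) 1 Λ (fun i y => by
      ext1 s
      by_cases h0 : H s y = 0
      · have h1 : H s (sh i y) = 0 := by rw [heq, h0, mul_zero]
        simp only [Λ, σ, dif_pos h0, dif_pos h1, fst_sh, dotProduct_add, zt_add]
        rw [mul_comm]; simp
      · have h1 : H s (sh i y) ≠ 0 := by
          rw [heq]; exact mul_ne_zero (zt (χ s i)).ne_zero h0
        simp only [Λ, σ, dif_neg h0, dif_neg h1]
        ext1
        simp [heq, zt])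
    (cup2 ((Finset.univ : Finset ι).toList.map t))
    (cup2_bd _ (by
      intro t' ht'
      obtain ⟨s, -, rfl⟩ := List.mem_map.1 ht'
      exact htc s))
    (fun i l => cup2_mp _ _ (by
      intro t' ht'
      obtain ⟨s, -, rfl⟩ := List.mem_map.1 ht'
      exact htinv s i) l) (fun l => 2 * b l) (by rw [← Finset.mul_sum]; omega)
      (by rw [hev]; exact hb2) δ hδ
  have hne := cup2_ne _ _ hl2
  have hne' : ∀ s, ∃ x ∈ l, ∃ y ∈ l, ∃ z ∈ l, t s (Λ x) (Λ y) (Λ z) ≠ 0 := by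
    intro s
    have := hne (t s) (by simp)
    simpa using this
  obtain ⟨s0, -⟩ := hno (vtx 0)
  obtain ⟨y, hy, -⟩ := hne' s0
  obtain ⟨s, hs⟩ := hc1 y
  obtain ⟨x1, hx1, x2, hx2, x3, hx3, hx⟩ := hne' s
  have hbig : ∀ x ∈ l, 3 * c / 4 < ‖H s x‖ := by
    intro x hxl
    have h1 := hc2 x y (hl1 x hxl y hy) s
    have h2 := norm_sub_norm_le (H s y) (H s x)
    rw [norm_sub_rev] at h2
    linarith
  have hval : ∀ x ∈ l, (Λ x s : ℂ) = H s x := by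
    intro x hxl
    have h3 : H s x ≠ 0 := by
      intro h0
      have := hbig x hxl
      rw [h0, norm_zero] at this
      linarith
    simp only [Λ, dif_neg h3, Units.val_mk0]
  have key : ∀ x ∈ l, ∀ x' ∈ l, 0 < ((Λ x' s / Λ x s : ℂˣ) : ℂ).re := by
    intro x hxl x' hxl'
    rw [Units.val_div_eq_div_val, hval x hxl, hval x' hxl']
    apply re_div_pos
    have h1 := hc2 x' x (hl1 x' hxl' x hxl) s
    have := hbig x hxl
    linarith
  apply hx
  simp only [t]
  rw [bint_small _ _ (key x1 hx1 x2 hx2) (key x2 hx2 x3 hx3), Int.cast_zero]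

end Odd

end TT

namespace TT
section Fin
variable {p k m : ℕ}

theorem orth [Fact p.Prime] (a : Fin k → ZMod p) (ha : a ≠ 0) :
    ∑ χ : Fin k → ZMod p, (ZMod.stdAddChar (χ ⬝ᵥ a) : ℂ) = 0 := by
  let ψ : AddChar (Fin k → ZMod p) ℂ :=
    { toFun := fun χ => ZMod.stdAddChar (χ ⬝ᵥ a)
      map_zero_eq_one' := by simp
      map_add_eq_mul' := fun x y => by rw [add_dotProduct, AddChar.map_add_eq_mul] }
  have hψ : ψ ≠ 1 := by
    intro h
    apply ha
    ext i
    have h1 : ψ (Pi.single i 1) = 1 := by rw [h]; rfl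
    have h2 : (ZMod.stdAddChar (a i) : ℂ) = ZMod.stdAddChar (0 : ZMod p) := by
      rw [AddChar.map_zero_eq_one, ← h1]
      change _ = ZMod.stdAddChar (Pi.single i 1 ⬝ᵥ a)
      simp
    exact ZMod.injective_stdAddChar h2
  exact AddChar.sum_eq_zero_of_ne_one hψ

theorem inversion [Fact p.Prime] (F : (Fin k → ZMod p) → ℝ)
    (h : ∀ χ : Fin k → ZMod p, χ ≠ 0 → ∑ g, (ZMod.stdAddChar (χ ⬝ᵥ g) : ℂ) * F g = 0)
    (g0 : Fin k → ZMod p) : (p ^ k : ℝ) * F g0 = ∑ g, F g := by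
  have h1 : ∑ χ : Fin k → ZMod p, (ZMod.stdAddChar (-(χ ⬝ᵥ g0)) : ℂ) *
      ∑ g, (ZMod.stdAddChar (χ ⬝ᵥ g) : ℂ) * F g = ∑ g, (F g : ℂ) := by
    rw [Finset.sum_eq_single 0]
    · simp
    · intro χ _ hχ
      rw [h χ hχ, mul_zero]
    · simp
  have h2 : ∑ χ : Fin k → ZMod p, (ZMod.stdAddChar (-(χ ⬝ᵥ g0)) : ℂ) *
      ∑ g, (ZMod.stdAddChar (χ ⬝ᵥ g) : ℂ) * F g = (p ^ k : ℂ) * F g0 := by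
    simp only [Finset.mul_sum]
    rw [Finset.sum_comm, Finset.sum_eq_single g0]
    · simp only [← mul_assoc, ← AddChar.map_add_eq_mul, neg_add_cancel, AddChar.map_zero_eq_one,
        one_mul]
      simp
    · intro g _ hg
      have := orth (g - g0) (sub_ne_zero.2 hg)
      simp only [← mul_assoc, ← AddChar.map_add_eq_mul]
      rw [← Finset.sum_mul]
      have e : ∀ χ : Fin k → ZMod p, -(χ ⬝ᵥ g0) + χ ⬝ᵥ g = χ ⬝ᵥ (g - g0) := by
        intro χ; rw [dotProduct_sub]; ring
      simp only [e]
      rw [this, zero_mul]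
    · simp
  rw [h1] at h2
  exact_mod_cast h2.symm

variable {d : ℕ}

noncomputable def Psi (f : (Fin (m + 1) → ℝ) → EuclideanSpace ℝ (Fin d)) (x : Fin (m + 1) → ℝ) :
    EuclideanSpace ℝ (Fin d) := (∑ v, x v) • f ((∑ v, x v)⁻¹ • x)

theorem simplex_scale (x : Fin (m + 1) → ℝ) (hx : ∀ v, 0 ≤ x v) (h0 : ∑ v, x v ≠ 0) :
    (∑ v, x v)⁻¹ • x ∈ stdSimplex ℝ (Fin (m + 1)) := by
  have : 0 ≤ ∑ v, x v := Finset.sum_nonneg fun v _ => hx v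
  refine ⟨fun v => ?_, ?_⟩
  · have := hx v
    simp only [Pi.smul_apply, smul_eq_mul]; positivity
  · simp only [Pi.smul_apply, smul_eq_mul, ← Finset.mul_sum]
    exact inv_mul_cancel₀ h0

theorem Psi_cont (f : (Fin (m + 1) → ℝ) → EuclideanSpace ℝ (Fin d))
    (hf : ContinuousOn f (stdSimplex ℝ (Fin (m + 1)))) :
    ContinuousOn (Psi f) {x | ∀ v, 0 ≤ x v} := by
  have hsum : Continuous fun x : Fin (m + 1) → ℝ => ∑ v, x v := by fun_prop
  intro x hx
  by_cases h0 : ∑ v, x v = 0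
  · obtain ⟨C, hC⟩ := (isCompact_stdSimplex ℝ (Fin (m + 1))).exists_bound_of_continuousOn hf
    unfold ContinuousWithinAt
    have : Psi f x = 0 := by simp [Psi, h0]
    rw [this]
    refine squeeze_zero_norm' (a := fun x => |∑ v, x v| * C) ?_ ?_
    · filter_upwards [self_mem_nhdsWithin] with z hz
      by_cases hz0 : ∑ v, z v = 0
      · simp [Psi, hz0]
      · rw [Psi, norm_smul, Real.norm_eq_abs]
        exact mul_le_mul_of_nonneg_left (hC _ (simplex_scale z hz hz0)) (abs_nonneg _)
    · have : Filter.Tendsto (fun x : Fin (m + 1) → ℝ => |∑ v, x v| * C) (nhds x)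
          (nhds (|∑ v, x v| * C)) := (hsum.abs.mul continuous_const).tendsto x
      rw [h0, abs_zero, zero_mul] at this
      exact this.mono_left nhdsWithin_le_nhds
  · have hopen : {x : Fin (m + 1) → ℝ | ∑ v, x v ≠ 0} ∈ nhds x :=
      (isOpen_ne_fun hsum continuous_const).mem_nhds h0
    rw [← continuousWithinAt_inter hopen]
    have : ContinuousOn (Psi f) ({x | ∀ v, 0 ≤ x v} ∩ {x : Fin (m + 1) → ℝ | ∑ v, x v ≠ 0}) := by
      refine hsum.continuousOn.smul (hf.comp ?_ ?_)
      · refine ContinuousOn.smul (hsum.continuousOn.inv₀ fun z hz => hz.2) continuousOn_id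
      · rintro z ⟨hz, hz0⟩
        exact simplex_scale z hz hz0
    exact this x ⟨hx, h0⟩

variable [NeZero p]

noncomputable def Fc (f : (Fin (m + 1) → ℝ) → EuclideanSpace ℝ (Fin d)) (j : Option (Fin d))
    (g : Fin k → ZMod p) (y : Mx p k m) : ℝ :=
  match j with
  | none => ∑ v, y v g
  | some j => Psi f (fun v => y v g) j

theorem K_nonneg (y : K p k m) (v) (g) : 0 ≤ y.1 v g := by
  obtain ⟨γ, h, -⟩ := y.2
  exact h v g

theorem Fc_cont (f : (Fin (m + 1) → ℝ) → EuclideanSpace ℝ (Fin d))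
    (hf : ContinuousOn f (stdSimplex ℝ (Fin (m + 1)))) (j : Option (Fin d)) (g : Fin k → ZMod p) :
    Continuous fun y : K p k m => Fc f j g y.1 := by
  have h0 : ∀ v, Continuous fun y : K p k m => y.1 v g := fun v =>
    (continuous_apply_apply (ρ := fun _ _ => ℝ) v g).comp continuous_subtype_val
  rcases j with _ | j
  · exact continuous_finsetSum _ fun v _ => h0 v
  · have h1 : Continuous fun y : K p k m => Psi f (fun v => y.1 v g) :=
      (Psi_cont f hf).comp_continuous (continuous_pi h0) fun y v => K_nonneg y v g
    exact (EuclideanSpace.proj j : EuclideanSpace ℝ (Fin d) →L[ℝ] ℝ).continuous.comp h1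

theorem Fc_sh (f : (Fin (m + 1) → ℝ) → EuclideanSpace ℝ (Fin d)) (j : Option (Fin d))
    (g h : Fin k → ZMod p) (y : Mx p k m) : Fc f j g (shf h y) = Fc f j (g - h) y := by
  rcases j with _ | j <;> rfl

noncomputable def Hc (f : (Fin (m + 1) → ℝ) → EuclideanSpace ℝ (Fin d)) (j : Option (Fin d))
    (χ : Fin k → ZMod p) (y : K p k m) : ℂ :=
  ∑ g, (ZMod.stdAddChar (χ ⬝ᵥ g) : ℂ) * Fc f j g y.1

theorem Hc_cont (f : (Fin (m + 1) → ℝ) → EuclideanSpace ℝ (Fin d))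
    (hf : ContinuousOn f (stdSimplex ℝ (Fin (m + 1)))) (j : Option (Fin d)) (χ : Fin k → ZMod p) :
    Continuous (Hc (m := m) f j χ) := by
  unfold Hc
  refine continuous_finsetSum _ fun g _ => continuous_const.mul ?_
  exact Complex.continuous_ofReal.comp (Fc_cont f hf j g)

theorem Hc_sh (f : (Fin (m + 1) → ℝ) → EuclideanSpace ℝ (Fin d)) (j : Option (Fin d))
    (χ : Fin k → ZMod p) (i : Fin k) (y : K p k m) :
    Hc f j χ (sh i y) = ZMod.stdAddChar (χ i) * Hc f j χ y := by
  unfold Hc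
  simp only [sh, Fc_sh]
  rw [← Equiv.sum_comp (Equiv.addRight (Pi.single i 1 : Fin k → ZMod p)), Finset.mul_sum]
  refine Finset.sum_congr rfl fun g _ => ?_
  simp only [Equiv.coe_addRight, add_sub_cancel_right, dotProduct_add, AddChar.map_add_eq_mul]
  rw [← mul_assoc]
  congr 1
  rw [mul_comm]
  simp

theorem Hc_neg (f : (Fin (m + 1) → ℝ) → EuclideanSpace ℝ (Fin d)) (j : Option (Fin d))
    (χ : Fin k → ZMod p) (y : K p k m) :
    Hc f j (-χ) y = (starRingEnd ℂ) (Hc f j χ y) := by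
  unfold Hc
  rw [map_sum]
  refine Finset.sum_congr rfl fun g _ => ?_
  rw [map_mul, Complex.conj_ofReal, neg_dotProduct, AddChar.map_neg_eq_conj]

theorem exists_zero [Fact p.Prime] (f : (Fin (m + 1) → ℝ) → EuclideanSpace ℝ (Fin d))
    (hf : ContinuousOn f (stdSimplex ℝ (Fin (m + 1)))) (hm : (d + 1) * (p ^ k - 1) ≤ m) :
    ∃ y : K p k m, ∀ j χ, χ ≠ 0 → Hc f j χ y = 0 := by
  classical
  rcases (Fact.out : p.Prime).eq_two_or_odd with rfl | hodd
  · obtain ⟨y, hy⟩ := core2 (ι := Option (Fin d) × {χ : Fin k → ZMod 2 // χ ≠ 0})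
      (fun s => s.2.1) (fun s => s.2.2) (fun s y => Hc f s.1 s.2.1 y) (fun s => Hc_cont f hf _ _)
      (fun s y => by
        have := Hc_neg f s.1 s.2.1 y
        have e : -s.2.1 = s.2.1 := by
          ext i; simp only [Pi.neg_apply]; exact neg_eq_of_add_eq_zero_left (z2two _)
        rw [e] at this
        exact Complex.conj_eq_iff_im.1 this.symm)
      (fun s i y => Hc_sh f _ _ i y) (by
        simp only [Fintype.card_prod, Fintype.card_option, Fintype.card_fin]
        rw [Fintype.card_subtype_compl]
        simpa using hm)
    exact ⟨y, fun j χ hχ => hy (j, ⟨χ, hχ⟩)⟩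
  · let e := Fintype.equivFin (Fin k → ZMod p)
    have h2 : (2 : ZMod p) ≠ 0 := by
      intro h
      have : p ∣ 2 := by
        rw [← ZMod.natCast_eq_zero_iff]; exact_mod_cast h
      have := (Nat.prime_dvd_prime_iff_eq Fact.out Nat.prime_two).1 this
      omega
    have hneg : ∀ χ : Fin k → ZMod p, χ ≠ 0 → χ ≠ -χ := by
      intro χ hχ h
      apply hχ
      ext i
      have := congrFun h i
      simp only [Pi.neg_apply] at this
      have h3 : 2 * χ i = 0 := by linear_combination this
      exact (mul_eq_zero.1 h3).resolve_left h2
    have hcard : 2 * Fintype.card {χ : Fin k → ZMod p // e χ < e (-χ)} ≤ p ^ k - 1 := by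
      rw [Fintype.card_subtype]
      set A := Finset.univ.filter fun χ : Fin k → ZMod p => e χ < e (-χ) with hA
      have hB : (A.image fun χ => -χ).card = A.card :=
        Finset.card_image_of_injective _ neg_injective
      have hd : Disjoint A (A.image fun χ => -χ) := by
        rw [Finset.disjoint_left]
        intro x hx hx'
        obtain ⟨z, hz, rfl⟩ := Finset.mem_image.1 hx'
        simp only [hA, Finset.mem_filter, Finset.mem_univ, true_and, neg_neg] at hx hz
        exact lt_asymm hx hz
      have hs : A ∪ (A.image fun χ => -χ) ⊆ Finset.univ.erase 0 := by
        intro x hx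
        rw [Finset.mem_erase]
        refine ⟨?_, Finset.mem_univ _⟩
        rintro rfl
        simp [hA] at hx
      have := Finset.card_le_card hs
      rw [Finset.card_union_of_disjoint hd, hB, Finset.card_erase_of_mem (Finset.mem_univ _),
        Finset.card_univ, Fintype.card_fun, ZMod.card, Fintype.card_fin] at this
      omega
    obtain ⟨y, hy⟩ := coreOdd (p := p) (ι := Option (Fin d) × {χ : Fin k → ZMod p // e χ < e (-χ)})
      (fun s => s.2.1) (fun s h => by have := s.2.2; simp [h] at this)
      (fun s y => Hc f s.1 s.2.1 y) (fun s => Hc_cont f hf _ _)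
      (fun s i y => Hc_sh f _ _ i y) (by
        simp only [Fintype.card_prod, Fintype.card_option, Fintype.card_fin]
        calc _ = (d + 1) * (2 * Fintype.card {χ : Fin k → ZMod p // e χ < e (-χ)}) := by ring
          _ ≤ (d + 1) * (p ^ k - 1) := Nat.mul_le_mul_left _ hcard
          _ ≤ m := hm)
    refine ⟨y, fun j χ hχ => ?_⟩
    rcases lt_trichotomy (e χ) (e (-χ)) with h | h | h
    · exact hy (j, ⟨χ, h⟩)
    · exact absurd (e.injective h) (hneg χ hχ)
    · have := hy (j, ⟨-χ, by rwa [neg_neg]⟩)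
      simp only [Hc_neg] at this
      simpa using this

theorem tv [Fact p.Prime] (f : (Fin (m + 1) → ℝ) → EuclideanSpace ℝ (Fin d))
    (hf : ContinuousOn f (stdSimplex ℝ (Fin (m + 1)))) (hm : (d + 1) * (p ^ k - 1) ≤ m) :
    ∃ S : (Fin k → ZMod p) → Finset (Fin (m + 1)),
      (∀ i, (S i).Nonempty) ∧
      (∀ i j, i ≠ j → Disjoint (S i) (S j)) ∧
      ∃ z, ∀ i, z ∈ f '' {x ∈ stdSimplex ℝ (Fin (m + 1)) | ∀ v ∉ S i, x v = 0} := by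
  classical
  obtain ⟨y, hy⟩ := exists_zero f hf hm
  have hr : (0 : ℝ) < p ^ k := by
    have : 0 < p := (Fact.out : p.Prime).pos
    positivity
  have hinv : ∀ j g, (p ^ k : ℝ) * Fc f j g y.1 = ∑ g, Fc f j g y.1 := fun j g =>
    inversion (fun g => Fc f j g y.1) (fun χ hχ => hy j χ hχ) g
  have hlam : ∀ g, ∑ v, y.1 v g = ((p : ℝ) ^ k)⁻¹ := by
    intro g
    have := hinv none g
    simp only [Fc] at this
    rw [Finset.sum_comm] at this
    obtain ⟨γ, -, h2, -⟩ := y.2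
    rw [h2] at this
    exact eq_inv_of_mul_eq_one_right this
  refine ⟨fun g => Finset.univ.filter fun v => y.1 v g ≠ 0, fun g => ?_, fun g g' hg => ?_,
    f (((p : ℝ) ^ k) • fun v => y.1 v 0), fun g => ⟨((p : ℝ) ^ k) • fun v => y.1 v g, ⟨?_, ?_⟩, ?_⟩⟩
  · by_contra hne
    rw [Finset.not_nonempty_iff_eq_empty, Finset.filter_eq_empty_iff] at hne
    have h1 := hlam g
    rw [Finset.sum_eq_zero fun v hv => not_not.1 (hne hv)] at h1
    exact (inv_pos.2 hr).ne h1
  · rw [Finset.disjoint_left]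
    intro v h1 h2
    simp only [Finset.mem_filter, Finset.mem_univ, true_and] at h1 h2
    obtain ⟨γ, -, -, h3⟩ := y.2
    apply hg
    have e1 : g = γ v := by by_contra h; exact h1 (h3 v g h)
    have e2 : g' = γ v := by by_contra h; exact h2 (h3 v g' h)
    rw [e1, e2]
  · have := simplex_scale (fun v => y.1 v g) (fun v => K_nonneg y v g)
      (by rw [hlam]; positivity)
    rwa [hlam, inv_inv] at this
  · intro v hv
    simp only [Finset.mem_filter, Finset.mem_univ, true_and, not_not] at hv
    simp [hv]
  · ext j
    have h1 := (hinv (some j) g).trans (hinv (some j) 0).symm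
    have h2 := mul_left_cancel₀ hr.ne' h1
    simp only [Fc, Psi, hlam, inv_inv, PiLp.smul_apply, smul_eq_mul] at h2
    exact mul_left_cancel₀ (inv_pos.2 hr).ne' h2

end Fin

end TT


theorem topological_tverberg_theorem (d r : ℕ) (hd : 1 ≤ d)
    (hr : ∃ p k : ℕ, p.Prime ∧ 1 ≤ k ∧ r = p ^ k)
    (m : ℕ) (hm : m = (d + 1) * r - 1)
    (f : (Fin (m + 1) → ℝ) → EuclideanSpace ℝ (Fin d))
    (hf : ContinuousOn f (stdSimplex ℝ (Fin (m + 1)))) :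
    ∃ S : Fin r → Finset (Fin (m + 1)),
      (∀ i, (S i).Nonempty) ∧
      (∀ i j, i ≠ j → Disjoint (S i) (S j)) ∧
      (⋂ i : Fin r,
        f '' {x ∈ stdSimplex ℝ (Fin (m + 1)) | ∀ v ∉ S i, x v = 0}).Nonempty := by
  obtain ⟨p, k, hp, hk, rfl⟩ := hr
  have : Fact p.Prime := ⟨hp⟩
  have hle : (d + 1) * (p ^ k - 1) ≤ m := by
    rw [Nat.mul_sub, hm]
    omega
  obtain ⟨S, h1, h2, z, h3⟩ := TT.tv (p := p) (k := k) f hf hle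
  have e : Fin (p ^ k) ≃ (Fin k → ZMod p) :=
    (Fintype.equivFinOfCardEq (by simp)).symm
  exact ⟨fun i => S (e i), fun i => h1 _, fun i j hij => h2 _ _ (fun h => hij (e.injective h)),
    z, Set.mem_iInter.2 fun i => h3 (e i)⟩
end

section
/- Let M be a metric space, k ≥ 1 an integer, and K₁, …, K_k compact subsets of M. Suppose that for every ε > 0 there exist a topological space P and a continuous map g : M → P such that every fiber g⁻¹(p) (p ∈ P) has diameter at most ε, and such that ⋂_{i=1}^{k} g(K_i) ≠ ∅. Then ⋂_{i=1}^{k} K_i ≠ ∅. -/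
/-- If `K₁, …, K_k` are compact subsets of a metric space `M` and for every `ε > 0`
there is a continuous map `g : M → P` with all fibers of diameter at most `ε` whose
images `g(K_i)` have a common point, then the sets `K_i` themselves have a common
point. -/
theorem compact_inter_nonempty_of_small_fiber_maps {M : Type*} [MetricSpace M]
    (k : ℕ) (hk : 1 ≤ k) (K : Fin k → Set M)
    (hcompact : ∀ i, IsCompact (K i))
    (h : ∀ ε > (0 : ℝ), ∃ (P : Type) (_ : TopologicalSpace P) (g : M → P),
      Continuous g ∧ (∀ p : P, EMetric.diam (g ⁻¹' {p}) ≤ ENNReal.ofReal ε) ∧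
      (⋂ i, g '' K i).Nonempty) :
    (⋂ i, K i).Nonempty := by
  have key : ∀ n : ℕ, ∃ x : Fin k → M, (∀ i, x i ∈ K i) ∧
      ∀ i j, dist (x i) (x j) ≤ 1 / ((n : ℝ) + 1) := by
    intro n
    have hpos : (0 : ℝ) < 1 / ((n : ℝ) + 1) := by positivity
    obtain ⟨P, _, g, _, hd, p, hp⟩ := h _ hpos
    have hp2 : ∀ i, ∃ y, y ∈ K i ∧ g y = p := fun i => Set.mem_iInter.1 hp i
    choose x hx hgx using hp2
    refine ⟨x, hx, fun i j => ?_⟩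
    have h1 : edist (x i) (x j) ≤ ENNReal.ofReal (1 / ((n : ℝ) + 1)) :=
      le_trans (Metric.edist_le_ediam_of_mem (hgx i) (hgx j)) (hd p)
    rw [edist_dist] at h1
    exact (ENNReal.ofReal_le_ofReal_iff hpos.le).1 h1
  choose x hx hd using key
  obtain ⟨a, -, φ, hφ, ha⟩ :=
    (hcompact ⟨0, hk⟩).tendsto_subseq (fun n => hx n ⟨0, hk⟩)
  refine ⟨a, Set.mem_iInter.2 fun i => ?_⟩
  refine (hcompact i).isClosed.mem_of_tendsto (f := fun n => x (φ n) i)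
    (b := Filter.atTop) ?_ (Filter.Eventually.of_forall fun n => hx _ i)
  refine ha.congr_dist ?_
  exact squeeze_zero (fun _ => dist_nonneg) (fun n => hd (φ n) _ i)
    ((tendsto_one_div_add_atTop_nhds_zero_nat (𝕜 := ℝ)).comp hφ.tendsto_atTop)
end
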